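/- (Cruz-Uribe–Martell–Pérez extension of Sawyer's inequality to ℝ^n) Let u and v be weights on ℝ^n with u ∈ A_1 and v ∈ A_1. Then there exists a constant C such that for every locally integrable function f on ℝ^n and every t > 0, uv({x ∈ ℝ^n : M(fv)(x)/v(x) > t}) ≤ (C/t) ∫_{ℝ^n} |f(x)| u(x) v(x) dx, where uv denotes the weight u·v. -/

import Mathlib

open MeasureTheory ENNReal Set

noncomputable section

/-- Euclidean space `ℝ^n`. -/
abbrev ESp (n : ℕ) := EuclideanSpace ℝ (Fin n)

/-- An axis-parallel cube with positive finite side length. -/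
def IsCube {n : ℕ} (Q : Set (ESp n)) : Prop :=
  ∃ (c : Fin n → ℝ) (h : ℝ), 0 < h ∧ Q = {x : ESp n | ∀ i, c i ≤ x i ∧ x i ≤ c i + h}

/-- The measure `w(E) = ∫_E w` associated to a weight `w`. -/
def wMeas {n : ℕ} (w : ESp n → ℝ) (E : Set (ESp n)) : ℝ≥0∞ :=
  ∫⁻ x in E, ENNReal.ofReal (w x)

/-- A weight: a nonnegative locally integrable function, positive (and finite) a.e. -/
def IsWeight {n : ℕ} (w : ESp n → ℝ) : Prop :=
  Measurable w ∧ (∀ x, 0 ≤ w x) ∧ (∀ᵐ x ∂(volume : Measure (ESp n)), 0 < w x) ∧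
    ∀ Q : Set (ESp n), IsCube Q → wMeas w Q < ⊤

/-- `C` is an admissible `A₁` constant for `w`. -/
def A1Const {n : ℕ} (w : ESp n → ℝ) (C : ℝ≥0∞) : Prop :=
  ∀ Q : Set (ESp n), IsCube Q →
    (volume Q)⁻¹ * wMeas w Q ≤ C * essInf (fun x => ENNReal.ofReal (w x)) (volume.restrict Q)

/-- The Muckenhoupt class `A₁`. -/
def IsA1 {n : ℕ} (w : ESp n → ℝ) : Prop := ∃ C : ℝ≥0∞, C < ⊤ ∧ A1Const w C

/-- The Muckenhoupt class `A_p`, `1 < p < ∞`. -/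
def IsAp {n : ℕ} (w : ESp n → ℝ) (p : ℝ) : Prop :=
  ∃ C : ℝ≥0∞, C < ⊤ ∧ ∀ Q : Set (ESp n), IsCube Q →
    ((volume Q)⁻¹ * wMeas w Q) *
      ((volume Q)⁻¹ * ∫⁻ x in Q, ENNReal.ofReal (w x) ^ (1 - p / (p - 1))) ^ (p - 1) ≤ C

/-- The class `A_∞ = ⋃_{p ≥ 1} A_p`. -/
def IsAinfty {n : ℕ} (w : ESp n → ℝ) : Prop :=
  IsA1 w ∨ ∃ p : ℝ, 1 < p ∧ IsAp w p

/-- The Hardy–Littlewood maximal function (over cubes). -/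
def maxFn {n : ℕ} (f : ESp n → ℝ) (x : ESp n) : ℝ≥0∞ :=
  ⨆ (Q : Set (ESp n)) (_ : IsCube Q) (_ : x ∈ Q),
    (volume Q)⁻¹ * ∫⁻ y in Q, ENNReal.ofReal |f y|

/-- The Fujii–Wilson `A_∞` constant. -/
def FW {n : ℕ} (w : ESp n → ℝ) : ℝ≥0∞ :=
  ⨆ (Q : Set (ESp n)) (_ : IsCube Q),
    (wMeas w Q)⁻¹ * ∫⁻ x in Q, maxFn (Q.indicator w) x

/-- The weighted weak `L^{q,∞}(w)` quasinorm of `g`. -/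
def wnorm {n : ℕ} (g : ESp n → ℝ≥0∞) (q : ℝ) (w : ESp n → ℝ) : ℝ≥0∞ :=
  ⨆ (t : ℝ) (_ : 0 < t), ENNReal.ofReal t * (wMeas w {x | ENNReal.ofReal t < g x}) ^ (1 / q)

/-- The weighted `L¹(w)` norm. -/
def L1norm {n : ℕ} (f : ESp n → ℝ) (w : ESp n → ℝ) : ℝ≥0∞ :=
  ∫⁻ x, ENNReal.ofReal (|f x| * w x)

/-- The fractional maximal operator `M_α`. -/
def fracM {n : ℕ} (α : ℝ) (f : ESp n → ℝ) (x : ESp n) : ℝ≥0∞ :=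
  ⨆ (Q : Set (ESp n)) (_ : IsCube Q) (_ : x ∈ Q),
    ((volume Q) ^ (1 - α / (n : ℝ)))⁻¹ * ∫⁻ y in Q, ENNReal.ofReal |f y|

/-- The fractional integral (Riesz potential) `I_α`. -/
def fracI {n : ℕ} (α : ℝ) (f : ESp n → ℝ) (x : ESp n) : ℝ :=
  ∫ y, f y / dist x y ^ ((n : ℝ) - α)

/-- The multi(sub)linear maximal function `𝓜`. -/
def multiM {n m : ℕ} (f : Fin m → ESp n → ℝ) (x : ESp n) : ℝ≥0∞ :=
  ⨆ (Q : Set (ESp n)) (_ : IsCube Q) (_ : x ∈ Q),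
    ∏ i, (volume Q)⁻¹ * ∫⁻ y in Q, ENNReal.ofReal |f i y|

/-- The multi(sub)linear fractional maximal operator `𝓜_α`. -/
def multiMα {n m : ℕ} (α : ℝ) (f : Fin m → ESp n → ℝ) (x : ESp n) : ℝ≥0∞ :=
  ⨆ (Q : Set (ESp n)) (_ : IsCube Q) (_ : x ∈ Q),
    ∏ i, ((volume Q) ^ (1 - α / ((m : ℝ) * (n : ℝ))))⁻¹ * ∫⁻ y in Q, ENNReal.ofReal |f i y|

/-- The multilinear fractional integral `𝓘_α`. -/
def multiIα {n m : ℕ} (α : ℝ) (f : Fin m → ESp n → ℝ) (x : ESp n) : ℝ :=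
  ∫ y : Fin m → ESp n, (∏ i, f i (y i)) / (∑ i, dist x (y i)) ^ ((m : ℝ) * (n : ℝ) - α)

/-- The multilinear class `A_{(1,…,1)}`. -/
def A11 {n m : ℕ} (w : Fin m → ESp n → ℝ) : Prop :=
  ∃ C : ℝ≥0∞, C < ⊤ ∧ ∀ Q : Set (ESp n), IsCube Q →
    ((volume Q)⁻¹ * ∫⁻ x in Q, ENNReal.ofReal (∏ i, w i x ^ ((m : ℝ)⁻¹))) ^ (m : ℝ) *
      ∏ i, (essInf (fun x => ENNReal.ofReal (w i x)) (volume.restrict Q))⁻¹ ≤ C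

/-!
In the sup norm cubes are balls, and a point where `M(fv) / v > t` lies, up to a dimensional
constant, in the set `{M g > v}` with `M` the centred maximal operator and `g = fv / t`. For large
`a`, every slice of this set on which `a ^ k < v ≤ a ^ (k + 1)` is covered by five-fold dilates of
disjoint balls over which `g` has average about `a ^ k`, chosen with nearly maximal radius.

An `A₁` weight satisfies a quantitative `A_∞` condition, with constants depending only on the
dimension and the `A₁` constant, and this condition is used twice.
* For `v`: among the balls for which `a ^ k` exceeds the average of `v` by a fixed power `a ^ p`,
  the ones `m` levels above a given ball and meeting it have `g`-mass `O(2⁻ᵐ)` times that of the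
  given ball. After thinning out the levels, each ball therefore has at least half of its `g`-mass
  outside the balls of higher level, and these parts are pairwise disjoint.
* For `u`: the slice occupies a fraction `O(a⁻ᵖ)` of such a dilate, hence carries a fraction
  `O(2⁻ᵖ)` of its `u`-mass, so the contributions of the different `p` can be summed.
-/

open Metric Module Filter
open scoped NNReal Topology

section Preliminaries

lemma le_inv_two_pow_mul {m : ℕ} {b c : ℝ≥0∞} (h : 2 ^ m * b ≤ c) : b ≤ 2⁻¹ ^ m * c := by
  calc b = 2⁻¹ ^ m * (2 ^ m * b) := by
        rw [← mul_assoc, ← mul_pow, ENNReal.inv_mul_cancel two_ne_zero ofNat_ne_top, one_pow,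
          one_mul]
    _ ≤ 2⁻¹ ^ m * c := by gcongr

variable {α ι : Type*} [MeasurableSpace α] {μ : Measure α}

lemma mul_measure_le_setLIntegral {S : Set α} (hS : MeasurableSet S) {f : α → ℝ≥0∞} {c : ℝ≥0∞}
    (h : ∀ᵐ x ∂μ, x ∈ S → c ≤ f x) : c * μ S ≤ ∫⁻ x in S, f x ∂μ := by
  rw [← setLIntegral_const]
  exact setLIntegral_mono_ae' hS h

lemma setLIntegral_biUnion_le_mul_measure_biUnion {U : Set ι} (hU : U.Countable)
    {s t : ι → Set α} {f : α → ℝ≥0∞} {M : ℝ≥0∞} (hs : ∀ i ∈ U, MeasurableSet (s i))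
    (hd : U.PairwiseDisjoint s) (h : ∀ i ∈ U, ∫⁻ x in t i, f x ∂μ ≤ M * μ (s i)) :
    ∫⁻ x in ⋃ i ∈ U, t i, f x ∂μ ≤ M * μ (⋃ i ∈ U, s i) := by
  have := hU.to_subtype
  calc ∫⁻ x in ⋃ i ∈ U, t i, f x ∂μ
      = ∫⁻ x in ⋃ i : U, t i, f x ∂μ := by rw [biUnion_eq_iUnion]
    _ ≤ ∑' i : U, ∫⁻ x in t i, f x ∂μ := lintegral_iUnion_le _ _
    _ ≤ ∑' i : U, M * μ (s i) := ENNReal.tsum_le_tsum fun i ↦ h i i.2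
    _ = M * μ (⋃ i ∈ U, s i) := by rw [ENNReal.tsum_mul_left, measure_biUnion hU hd hs]

end Preliminaries

section Balls

lemma exists_countable_disjoint_closedBall_cover {X ι : Type*} [PseudoMetricSpace X]
    [TopologicalSpace.SeparableSpace X] (T : Set ι) (x : ι → X) (r : ι → ℝ) (R : ℝ)
    (hr : ∀ i ∈ T, 0 < r i) (hR : ∀ i ∈ T, r i ≤ R) :
    ∃ U ⊆ T, U.Countable ∧ U.PairwiseDisjoint (fun i ↦ closedBall (x i) (r i)) ∧
      ∀ i ∈ T, ∃ j ∈ U, closedBall (x i) (r i) ⊆ closedBall (x j) (5 * r j) := by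
  obtain ⟨U, hUT, hd, hcover⟩ :=
    Vitali.exists_disjoint_subfamily_covering_enlargement_closedBall T x r R hR 5 (by norm_num)
  refine ⟨U, hUT, hd.countable_of_nonempty_interior fun i hi ↦ ?_, hd, hcover⟩
  exact (nonempty_ball.2 (hr i (hUT hi))).mono ball_subset_interior_closedBall

variable {E : Type*} [NormedAddCommGroup E] [NormedSpace ℝ E]

lemma mem_closedBall_lineMap {x y : E} {R t : ℝ} (hy : y ∈ closedBall x R) (ht : 0 ≤ t) :
    y ∈ closedBall (AffineMap.lineMap y x t) (t * R) := by
  rw [mem_closedBall] at hy ⊢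
  rw [dist_left_lineMap, Real.norm_of_nonneg ht]
  gcongr

lemma closedBall_lineMap_subset {x y : E} {R s t : ℝ} (hy : y ∈ closedBall x R) (hst : s ≤ t) :
    closedBall (AffineMap.lineMap y x s) (s * R) ⊆
      closedBall (AffineMap.lineMap y x t) (t * R) := by
  apply closedBall_subset_closedBall'
  have hdist : dist (AffineMap.lineMap y x s) (AffineMap.lineMap y x t) ≤ (t - s) * R := by
    rw [dist_lineMap_lineMap, dist_comm s, Real.dist_eq, abs_of_nonneg (sub_nonneg.2 hst)]
    gcongr
    exact hy
  linarith

variable [FiniteDimensional ℝ E] [MeasurableSpace E] [BorelSpace E] {μ : Measure E}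
  [μ.IsAddHaarMeasure]

lemma addHaar_closedBall_ofNat_mul (x y : E) (c : ℕ) [c.AtLeastTwo] {r : ℝ} (hr : 0 ≤ r) :
    μ (closedBall x (OfNat.ofNat c * r)) =
      OfNat.ofNat c ^ finrank ℝ E * μ (closedBall y r) := by
  rw [Measure.addHaar_closedBall_mul μ x (Nat.ofNat_nonneg c) hr,
    Measure.addHaar_closedBall_center μ y, ENNReal.ofReal_pow (Nat.ofNat_nonneg c),
    ENNReal.ofReal_ofNat]

end Balls

section A1Weights

/-- An `A₁` weight with constant `C`, with closed balls of the norm in the role of cubes and with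
the essential infimum over a ball unfolded into an almost everywhere bound. -/
structure IsA1Weight {E : Type*} [PseudoMetricSpace E] [MeasurableSpace E] (μ : Measure E)
    (w : E → ℝ≥0∞) (C : ℝ≥0) : Prop where
  measurable : Measurable w
  ae_pos : ∀ᵐ y ∂μ, 0 < w y
  setLIntegral_ne_top : ∀ x r, 0 < r → ∫⁻ z in closedBall x r, w z ∂μ ≠ ⊤
  ae_setLIntegral_le : ∀ x r, 0 < r → ∀ᵐ y ∂μ, y ∈ closedBall x r →
    ∫⁻ z in closedBall x r, w z ∂μ ≤ C * μ (closedBall x r) * w y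

namespace IsA1Weight

section Metric

variable {E : Type*} [PseudoMetricSpace E] [MeasurableSpace E] {μ : Measure E}
  {w : E → ℝ≥0∞} {C : ℝ≥0} {x : E} {r : ℝ}

lemma ae_lt_top [Nonempty E] (hw : IsA1Weight μ w C) : ∀ᵐ y ∂μ, w y < ⊤ := by
  obtain ⟨x⟩ := ‹Nonempty E›
  have hballs : ∀ᵐ y ∂μ.restrict (⋃ n : ℕ, closedBall x (n + 1)), w y < ⊤ :=
    ae_restrict_iUnion_iff _ _ |>.2 fun n ↦
      MeasureTheory.ae_lt_top hw.measurable (hw.setLIntegral_ne_top x (n + 1) (by positivity))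
  have huniv : ⋃ n : ℕ, closedBall x ((n : ℝ) + 1) = univ :=
    eq_univ_of_forall fun y ↦ mem_iUnion.2 <| by
      obtain ⟨n, hn⟩ := exists_nat_gt (dist y x)
      exact ⟨n, mem_closedBall.2 (by linarith)⟩
  rwa [huniv, Measure.restrict_univ] at hballs

lemma ae_lt_mul (hw : IsA1Weight μ w C) (hr : 0 < r) {lam : ℝ≥0∞}
    (h : lam * μ (closedBall x r) < ∫⁻ z in closedBall x r, w z ∂μ) :
    ∀ᵐ y ∂μ, y ∈ closedBall x r → lam < C * w y := by
  filter_upwards [hw.ae_setLIntegral_le x r hr] with y hy hyB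
  refine lt_of_mul_lt_mul_right' (a := μ (closedBall x r)) (h.trans_le ((hy hyB).trans_eq ?_))
  ring

lemma setLIntegral_ne_zero (hw : IsA1Weight μ w C) [μ.IsOpenPosMeasure] (hr : 0 < r) :
    ∫⁻ z in closedBall x r, w z ∂μ ≠ 0 := by
  rw [← pos_iff_ne_zero, setLIntegral_pos_iff hw.measurable,
    Measure.measure_inter_eq_of_ae (t := Function.support w) (hw.ae_pos.mono fun y hy ↦ hy.ne')]
  exact measure_closedBall_pos μ x hr

variable [ProperSpace E] [IsFiniteMeasureOnCompacts μ]

lemma setLIntegral_mul_setLIntegral_le (hw : IsA1Weight μ w C) (hr : 0 < r) {S : Set E}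
    (hS : MeasurableSet S) (hSB : S ⊆ closedBall x r) (g : E → ℝ≥0∞) :
    (∫⁻ z in closedBall x r, w z ∂μ) * ∫⁻ z in S, g z ∂μ ≤
      C * μ (closedBall x r) * ∫⁻ z in S, g z * w z ∂μ := by
  have hball : μ (closedBall x r) ≠ ⊤ := measure_closedBall_lt_top.ne
  rw [← lintegral_const_mul' _ _ (hw.setLIntegral_ne_top x r hr),
    ← lintegral_const_mul' _ _ (by finiteness)]
  refine setLIntegral_mono_ae' hS ?_
  filter_upwards [hw.ae_setLIntegral_le x r hr] with y hy hyS
  calc (∫⁻ z in closedBall x r, w z ∂μ) * g y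
      ≤ C * μ (closedBall x r) * w y * g y := by gcongr; exact hy (hSB hyS)
    _ = C * μ (closedBall x r) * (g y * w y) := by ring

lemma one_le [Nonempty E] [OpensMeasurableSpace E] [μ.IsOpenPosMeasure] (hw : IsA1Weight μ w C) :
    1 ≤ C := by
  obtain ⟨x⟩ := ‹Nonempty E›
  have h := hw.setLIntegral_mul_setLIntegral_le one_pos (x := x)
    isClosed_closedBall.measurableSet subset_rfl 1
  simp only [Pi.one_apply, one_mul, setLIntegral_const] at h
  rw [← ENNReal.one_le_coe_iff, ← ENNReal.mul_le_mul_iff_left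
    (mul_ne_zero (measure_closedBall_pos μ x one_pos).ne' (hw.setLIntegral_ne_zero one_pos))
    (ENNReal.mul_ne_top measure_closedBall_lt_top.ne (hw.setLIntegral_ne_top x 1 one_pos))]
  calc 1 * (μ (closedBall x 1) * ∫⁻ z in closedBall x 1, w z ∂μ)
      = (∫⁻ z in closedBall x 1, w z ∂μ) * μ (closedBall x 1) := by ring
    _ ≤ C * μ (closedBall x 1) * ∫⁻ z in closedBall x 1, w z ∂μ := h
    _ = C * (μ (closedBall x 1) * ∫⁻ z in closedBall x 1, w z ∂μ) := by ring

end Metric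

lemma setLIntegral_closedBall_ofNat_mul_le {E : Type*} [NormedAddCommGroup E] [NormedSpace ℝ E]
    [FiniteDimensional ℝ E] [MeasurableSpace E] [BorelSpace E] {μ : Measure E} [μ.IsAddHaarMeasure]
    {w : E → ℝ≥0∞} {C : ℝ≥0} (hw : IsA1Weight μ w C) (x : E) {r : ℝ} (hr : 0 < r) (c : ℕ)
    [c.AtLeastTwo] :
    ∫⁻ z in closedBall x (OfNat.ofNat c * r), w z ∂μ ≤
      C * OfNat.ofNat c ^ finrank ℝ E * ∫⁻ z in closedBall x r, w z ∂μ := by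
  have hc : (1 : ℝ) ≤ OfNat.ofNat c := Nat.one_le_ofNat
  have hball : μ (closedBall x r) ≠ 0 := (measure_closedBall_pos μ x hr).ne'
  have h := hw.setLIntegral_mul_setLIntegral_le (r := OfNat.ofNat c * r) (by positivity)
    isClosed_closedBall.measurableSet
    (closedBall_subset_closedBall (x := x) (le_mul_of_one_le_left hr.le hc)) 1
  simp only [Pi.one_apply, one_mul, setLIntegral_const] at h
  rw [addHaar_closedBall_ofNat_mul x x c hr.le] at h
  rw [← ENNReal.mul_le_mul_iff_left hball measure_closedBall_lt_top.ne]
  refine h.trans_eq ?_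
  ring

end IsA1Weight

end A1Weights

section AInf

variable {E : Type*} [NormedAddCommGroup E] [NormedSpace ℝ E] [FiniteDimensional ℝ E]
  [MeasurableSpace E] [BorelSpace E] {μ : Measure E} [μ.IsAddHaarMeasure] {w : E → ℝ≥0∞}

lemma ae_exists_mul_measure_lt_setLIntegral (hw : Measurable w) {x : E} {R : ℝ} (hR : 0 < R)
    (hwR : ∫⁻ z in closedBall x R, w z ∂μ ≠ ⊤) :
    ∀ᵐ y ∂μ, y ∈ closedBall x R → ∀ lam < w y, ∃ j : ℕ,
      lam * μ (closedBall (AffineMap.lineMap y x ((2⁻¹ : ℝ) ^ j)) (2⁻¹ ^ j * R)) <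
        ∫⁻ z in closedBall (AffineMap.lineMap y x ((2⁻¹ : ℝ) ^ j)) (2⁻¹ ^ j * R), w z ∂μ := by
  have hB : MeasurableSet (closedBall x R) := isClosed_closedBall.measurableSet
  filter_upwards [(IsUnifLocDoublingMeasure.vitaliFamily μ 1).ae_tendsto_lintegral_div
    (hw.indicator hB).aemeasurable (by rwa [lintegral_indicator hB])] with y hlim hy lam hlam
  have hradius : Tendsto (fun j : ℕ ↦ (2⁻¹ : ℝ) ^ j * R) atTop (𝓝[>] 0) := by
    refine tendsto_nhdsWithin_iff.2 ⟨?_, .of_forall fun j ↦ mem_Ioi.2 (by positivity)⟩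
    simpa only [zero_mul] using
      (_root_.tendsto_pow_atTop_nhds_zero_of_lt_one (r := (2⁻¹ : ℝ)) (by norm_num)
        (by norm_num)).mul_const R
  have hballs := hlim.comp <| IsUnifLocDoublingMeasure.tendsto_closedBall_filterAt μ
    (fun j : ℕ ↦ AffineMap.lineMap y x ((2⁻¹ : ℝ) ^ j)) (fun j ↦ 2⁻¹ ^ j * R) hradius <|
      .of_forall fun j ↦ by rw [one_mul]; exact mem_closedBall_lineMap hy (by positivity)
  rw [indicator_of_mem hy] at hballs
  obtain ⟨j, hj⟩ := (hballs.eventually (lt_mem_nhds hlam)).exists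
  refine ⟨j, lt_of_lt_of_le ?_ (lintegral_mono fun z ↦ indicator_le_self (closedBall x R) w z)⟩
  exact (ENNReal.lt_div_iff_mul_lt (.inl (measure_closedBall_pos μ _ (by positivity)).ne')
    (.inl measure_closedBall_lt_top.ne)).1 hj

-- Shrink `closedBall x R` towards `y` by factors of two and take the first ball of average `> lam`.
lemma ae_exists_closedBall_subset_lt_setLIntegral_le (hw : Measurable w) {x : E} {R : ℝ}
    (hR : 0 < R) {lam : ℝ≥0∞}
    (h : ∫⁻ z in closedBall x R, w z ∂μ ≤ lam * μ (closedBall x R)) :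
    ∀ᵐ y ∂μ, y ∈ closedBall x R → lam < w y → ∃ (c : E) (ρ : ℝ), 0 < ρ ∧ ρ ≤ R ∧
      y ∈ closedBall c ρ ∧ closedBall c ρ ⊆ closedBall x R ∧
      lam * μ (closedBall c ρ) < ∫⁻ z in closedBall c ρ, w z ∂μ ∧
      ∫⁻ z in closedBall c ρ, w z ∂μ ≤ 2 ^ finrank ℝ E * lam * μ (closedBall c ρ) := by
  rcases eq_or_ne lam ⊤ with rfl | hlam
  · exact .of_forall fun y _ hy ↦ absurd hy not_top_lt
  have hwR : ∫⁻ z in closedBall x R, w z ∂μ ≠ ⊤ :=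
    ne_top_of_le_ne_top (mul_ne_top hlam measure_closedBall_lt_top.ne) h
  filter_upwards [ae_exists_mul_measure_lt_setLIntegral hw hR hwR] with y hy hyx hlamy
  classical
  have hex := hy hyx lam hlamy
  obtain ⟨j, hfirst⟩ : ∃ j, Nat.find hex = j + 1 := Nat.exists_eq_succ_of_ne_zero fun h0 ↦ by
    have hlt := Nat.find_spec hex
    rw [h0, pow_zero, AffineMap.lineMap_apply_one, one_mul] at hlt
    exact hlt.not_ge h
  have hlt := hfirst ▸ Nat.find_spec hex
  have hle := not_lt.1 (Nat.find_min hex (by omega : j < Nat.find hex))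
  have hpow : (2⁻¹ : ℝ) ^ (j + 1) ≤ 2⁻¹ ^ j :=
    pow_le_pow_of_le_one (by norm_num) (by norm_num) j.le_succ
  have hone : (2⁻¹ : ℝ) ^ (j + 1) ≤ 1 := pow_le_one₀ (by norm_num) (by norm_num)
  refine ⟨_, 2⁻¹ ^ (j + 1) * R, by positivity, mul_le_of_le_one_left hR.le hone,
    mem_closedBall_lineMap hyx (by positivity), ?_, hlt, ?_⟩
  · simpa only [AffineMap.lineMap_apply_one, one_mul] using closedBall_lineMap_subset hyx hone
  · have hdouble : (2⁻¹ : ℝ) ^ j * R = 2 * (2⁻¹ ^ (j + 1) * R) := by rw [pow_succ]; ring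
    refine (lintegral_mono_set (closedBall_lineMap_subset hyx hpow)).trans (hle.trans_eq ?_)
    rw [hdouble, addHaar_closedBall_ofNat_mul _ (AffineMap.lineMap y x ((2⁻¹ : ℝ) ^ (j + 1))) 2
      (by positivity)]
    ring

lemma sum_dyadic_le_two_mul (lam b : ℝ≥0∞) (N : ℕ) :
    ∑ j ∈ Finset.range N, (if 2 ^ j * lam < b then 2 ^ j * lam else 0) ≤ 2 * b := by
  have hgeom (N : ℕ) : ∑ j ∈ Finset.range N, 2 ^ j * lam ≤ 2 ^ N * lam := by
    induction N with
    | zero => simp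
    | succ N ih =>
      rw [Finset.sum_range_succ, pow_succ, mul_two, add_mul]
      gcongr
  induction N with
  | zero => simp
  | succ N ih =>
    by_cases h : 2 ^ N * lam < b
    · calc ∑ j ∈ Finset.range (N + 1), (if 2 ^ j * lam < b then 2 ^ j * lam else 0)
          ≤ ∑ j ∈ Finset.range (N + 1), 2 ^ j * lam :=
            Finset.sum_le_sum fun j _ ↦ ite_le_sup _ _ _ |>.trans_eq (sup_of_le_left zero_le)
        _ ≤ 2 ^ (N + 1) * lam := hgeom _
        _ = 2 * (2 ^ N * lam) := by ring
        _ ≤ 2 * b := by gcongr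
    · rwa [Finset.sum_range_succ, if_neg h, add_zero]

lemma sum_dyadic_mul_measure_superlevel_le {α : Type*} [MeasurableSpace α] {μ : Measure α}
    {w : α → ℝ≥0∞} (hw : Measurable w) (Q : Set α) (lam : ℝ≥0∞) (N : ℕ) :
    ∑ j ∈ Finset.range N, 2 ^ j * lam * μ (Q ∩ {z | 2 ^ j * lam < w z}) ≤
      2 * ∫⁻ z in Q ∩ {z | lam < w z}, w z ∂μ := by
  have hlevel (s : ℝ≥0∞) : MeasurableSet {z | s < w z} := measurableSet_lt measurable_const hw
  have hterm (j : ℕ) : 2 ^ j * lam * μ (Q ∩ {z | 2 ^ j * lam < w z}) =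
      ∫⁻ z in Q ∩ {z | lam < w z}, (if 2 ^ j * lam < w z then 2 ^ j * lam else 0) ∂μ := by
    have hsub : {z | 2 ^ j * lam < w z} ⊆ {z | lam < w z} := fun z hz ↦
      lt_of_le_of_lt (le_mul_of_one_le_left' (one_le_pow₀ one_le_two)) (mem_ofPred_eq ▸ hz)
    calc 2 ^ j * lam * μ (Q ∩ {z | 2 ^ j * lam < w z})
        = ∫⁻ z in Q ∩ {z | lam < w z}, {z | 2 ^ j * lam < w z}.indicator (fun _ ↦ 2 ^ j * lam) z
            ∂μ := by
          rw [setLIntegral_indicator (hlevel _), setLIntegral_const, inter_left_comm,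
            inter_eq_left.2 hsub]
      _ = _ := by simp only [indicator_apply, mem_ofPred_eq]
  simp_rw [hterm]
  rw [← lintegral_finsetSum _ fun j _ ↦ Measurable.ite (hlevel _) measurable_const measurable_const,
    ← lintegral_const_mul _ hw]
  exact lintegral_mono fun z ↦ sum_dyadic_le_two_mul _ _ _

lemma IsA1Weight.setLIntegral_superlevel_le {C : ℝ≥0} (hw : IsA1Weight μ w C) {x : E} {R : ℝ}
    (hR : 0 < R) {lam : ℝ≥0∞} (h : ∫⁻ z in closedBall x R, w z ∂μ ≤ lam * μ (closedBall x R)) :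
    ∫⁻ z in closedBall x R ∩ {z | lam < w z}, w z ∂μ ≤
      C * 5 ^ finrank ℝ E * (2 ^ finrank ℝ E * lam) *
        μ (closedBall x R ∩ {z | lam < C * w z}) := by
  let T : Set (E × ℝ) := {p | (0 < p.2 ∧ p.2 ≤ R) ∧ closedBall p.1 p.2 ⊆ closedBall x R ∧
    lam * μ (closedBall p.1 p.2) < ∫⁻ z in closedBall p.1 p.2, w z ∂μ ∧
    ∫⁻ z in closedBall p.1 p.2, w z ∂μ ≤ 2 ^ finrank ℝ E * lam * μ (closedBall p.1 p.2)}
  obtain ⟨U, hUT, hU, hdisj, hcover⟩ := exists_countable_disjoint_closedBall_cover T Prod.fst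
    Prod.snd R (fun p hp ↦ hp.1.1) (fun p hp ↦ hp.1.2)
  have hsuperlevel : (closedBall x R ∩ {z | lam < w z} : Set E) ≤ᵐ[μ]
      (⋃ p ∈ U, closedBall p.1 (5 * p.2) : Set E) := by
    filter_upwards [ae_exists_closedBall_subset_lt_setLIntegral_le hw.measurable hR h]
      with y hy hyx
    obtain ⟨c, ρ, hρ, hρR, hyc, hsub, hlt, hle⟩ := hy hyx.1 hyx.2
    obtain ⟨p, hpU, hp⟩ := hcover (c, ρ) ⟨⟨hρ, hρR⟩, hsub, hlt, hle⟩
    exact mem_biUnion hpU (hp hyc)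
  have hballs : (⋃ p ∈ U, closedBall p.1 p.2 : Set E) ≤ᵐ[μ]
      (closedBall x R ∩ {z | lam < C * w z} : Set E) := by
    filter_upwards [(ae_ball_iff hU).2 fun p hp ↦ hw.ae_lt_mul (hUT hp).1.1 (hUT hp).2.2.1]
      with y hy hyU
    obtain ⟨p, hpU, hyp⟩ := mem_iUnion₂.1 hyU
    exact ⟨(hUT hpU).2.1 hyp, hy p hpU hyp⟩
  calc ∫⁻ z in closedBall x R ∩ {z | lam < w z}, w z ∂μ
      ≤ ∫⁻ z in ⋃ p ∈ U, closedBall p.1 (5 * p.2), w z ∂μ := lintegral_mono_set' hsuperlevel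
    _ ≤ C * 5 ^ finrank ℝ E * (2 ^ finrank ℝ E * lam) * μ (⋃ p ∈ U, closedBall p.1 p.2) := by
        refine setLIntegral_biUnion_le_mul_measure_biUnion hU
          (fun _ _ ↦ isClosed_closedBall.measurableSet) hdisj fun p hp ↦ ?_
        refine (hw.setLIntegral_closedBall_ofNat_mul_le p.1 (hUT hp).1.1 5).trans ?_
        rw [mul_assoc (C * 5 ^ finrank ℝ E : ℝ≥0∞)]
        gcongr
        exact (hUT hp).2.2.2
    _ ≤ _ := mul_le_mul_right (measure_mono_ae hballs) _

lemma IsA1Weight.setLIntegral_superlevel_mul_le {C : ℝ≥0} (hw : IsA1Weight μ w C) {x : E} {R : ℝ}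
    (hR : 0 < R) {lam : ℝ≥0∞} (h : ∫⁻ z in closedBall x R, w z ∂μ ≤ lam * μ (closedBall x R)) :
    ∫⁻ z in closedBall x R ∩ {z | C * lam < w z}, w z ∂μ ≤
      C * 5 ^ finrank ℝ E * (2 ^ finrank ℝ E * (C * lam)) *
        μ (closedBall x R ∩ {z | lam < w z}) := by
  have hC : (1 : ℝ≥0∞) ≤ C := ENNReal.one_le_coe_iff.2 hw.one_le
  refine (hw.setLIntegral_superlevel_le (lam := C * lam) hR (h.trans ?_)).trans ?_
  · gcongr
    exact le_mul_of_one_le_left' hC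
  · exact mul_le_mul_right (measure_mono <| inter_subset_inter_right _ fun z hz ↦
      lt_of_mul_lt_mul_left' (a := (C : ℝ≥0∞)) (show C * lam < C * w z from hz)) _

variable (μ) in
-- The mass above height `2 ^ N * lam` is controlled by each of the `N` dyadic layers between
-- `lam` and `2 ^ N * lam`, and these layers together carry a bounded multiple of the mass above
-- `lam`.
lemma exists_two_mul_setLIntegral_superlevel_le (C : ℝ≥0) :
    ∃ K : ℝ≥0, 1 ≤ K ∧ ∀ w, IsA1Weight μ w C → ∀ (x : E) (R : ℝ), 0 < R → ∀ lam : ℝ≥0∞,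
      ∫⁻ z in closedBall x R, w z ∂μ ≤ lam * μ (closedBall x R) →
      2 * ∫⁻ z in closedBall x R ∩ {z | K * lam < w z}, w z ∂μ ≤
        ∫⁻ z in closedBall x R ∩ {z | lam < w z}, w z ∂μ := by
  let D : ℝ≥0 := C * 5 ^ finrank ℝ E * 2 ^ finrank ℝ E * C
  obtain ⟨N, hN⟩ := exists_nat_ge (4 * D)
  refine ⟨(C + 1) * 2 ^ N, one_le_mul le_add_self (one_le_pow₀ one_le_two), ?_⟩
  intro w hw x R hR lam hlam
  set top := ∫⁻ z in closedBall x R ∩ {z | ((C + 1) * 2 ^ N : ℝ≥0) * lam < w z}, w z ∂μ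
  have hlayer : ∀ j ∈ Finset.range N,
      top ≤ D * (2 ^ j * lam * μ (closedBall x R ∩ {z | 2 ^ j * lam < w z})) := fun j hj ↦ by
    have hj : j ≤ N := (Finset.mem_range.1 hj).le
    refine (lintegral_mono_set (inter_subset_inter_right _ fun z hz ↦ ?_)).trans
      ((hw.setLIntegral_superlevel_mul_le hR (lam := 2 ^ j * lam) (hlam.trans ?_)).trans_eq ?_)
    · refine lt_of_le_of_lt ?_ (mem_ofPred_eq ▸ hz)
      push_cast
      rw [← mul_assoc]
      gcongr
      exacts [le_self_add, one_le_two]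
    · gcongr
      exact le_mul_of_one_le_left' (one_le_pow₀ one_le_two)
    · push_cast [D]
      ring
  have hsum : N * top ≤ D * (2 * ∫⁻ z in closedBall x R ∩ {z | lam < w z}, w z ∂μ) := by
    calc (N : ℝ≥0∞) * top = ∑ _j ∈ Finset.range N, top := by simp
      _ ≤ ∑ j ∈ Finset.range N,
            D * (2 ^ j * lam * μ (closedBall x R ∩ {z | 2 ^ j * lam < w z})) :=
          Finset.sum_le_sum hlayer
      _ ≤ _ := by
          rw [← Finset.mul_sum]
          gcongr
          exact sum_dyadic_mul_measure_superlevel_le hw.measurable _ lam N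
  have hD : (2 * D : ℝ≥0∞) ≠ 0 := by
    have : C ≠ 0 := (one_pos.trans_le hw.one_le).ne'
    exact_mod_cast (by positivity : 2 * D ≠ 0)
  rw [← ENNReal.mul_le_mul_iff_right hD (by finiteness)]
  calc 2 * D * (2 * top) = (4 * D : ℝ≥0) * top := by push_cast; ring
    _ ≤ N * top := by gcongr; exact_mod_cast hN
    _ ≤ _ := hsum
    _ = _ := by ring

variable (μ) in
lemma exists_setLIntegral_superlevel_mul_two_pow_le (C : ℝ≥0) :
    ∃ K : ℝ≥0, ∀ w, IsA1Weight μ w C → ∀ (x : E) (R : ℝ), 0 < R → ∀ lam : ℝ≥0∞,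
      ∫⁻ z in closedBall x R, w z ∂μ ≤ lam * μ (closedBall x R) → ∀ i : ℕ,
      (∫⁻ z in closedBall x R ∩ {z | K ^ i * lam < w z}, w z ∂μ) * 2 ^ i ≤
        ∫⁻ z in closedBall x R, w z ∂μ := by
  obtain ⟨K, hK, hhalf⟩ := exists_two_mul_setLIntegral_superlevel_le μ C
  refine ⟨K, fun w hw x R hR lam hlam i ↦ ?_⟩
  induction i with
  | zero => simpa only [pow_zero, mul_one] using lintegral_mono_set inter_subset_left
  | succ i ih =>
    have hstep := hhalf w hw x R hR (K ^ i * lam) <| hlam.trans <| by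
      gcongr
      exact le_mul_of_one_le_left' (one_le_pow₀ (ENNReal.one_le_coe_iff.2 hK))
    rw [← mul_assoc, ← pow_succ'] at hstep
    calc _ = (2 * ∫⁻ z in closedBall x R ∩ {z | K ^ (i + 1) * lam < w z}, w z ∂μ) * 2 ^ i := by
          ring
      _ ≤ (∫⁻ z in closedBall x R ∩ {z | K ^ i * lam < w z}, w z ∂μ) * 2 ^ i := by gcongr
      _ ≤ _ := ih

/-- A quantitative `A_∞` condition: a part of a ball whose relative measure is at most `D * a⁻ⁱ`
has relative `w`-mass at most `(D + 1) * 2⁻ⁱ`. -/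
def IsAInfWeight {E : Type*} [PseudoMetricSpace E] [MeasurableSpace E] (μ : Measure E)
    (w : E → ℝ≥0∞) (a : ℝ≥0) : Prop :=
  ∀ x r, 0 < r → ∀ S ⊆ closedBall x r, ∀ (i : ℕ) (D : ℝ≥0∞),
    μ S * a ^ i ≤ D * μ (closedBall x r) →
      (∫⁻ z in S, w z ∂μ) * 2 ^ i ≤ (D + 1) * ∫⁻ z in closedBall x r, w z ∂μ

lemma IsAInfWeight.mono {E : Type*} [PseudoMetricSpace E] [MeasurableSpace E] {μ : Measure E}
    {w : E → ℝ≥0∞} {a b : ℝ≥0} (hw : IsAInfWeight μ w a) (hab : a ≤ b) : IsAInfWeight μ w b :=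
  fun x r hr S hS i D h ↦ hw x r hr S hS i D (le_trans (by gcongr) h)

lemma setLIntegral_le_mul_measure_add {α : Type*} [MeasurableSpace α] {μ : Measure α}
    (w : α → ℝ≥0∞) {S Q : Set α} (hSQ : S ⊆ Q) (b : ℝ≥0∞) :
    ∫⁻ z in S, w z ∂μ ≤ b * μ S + ∫⁻ z in Q ∩ {z | b < w z}, w z ∂μ := by
  calc ∫⁻ z in S, w z ∂μ
      ≤ ∫⁻ z in (S ∩ {z | w z ≤ b}) ∪ (Q ∩ {z | b < w z}), w z ∂μ :=
        lintegral_mono_set fun z hz ↦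
          (le_or_gt (w z) b).imp (fun hle ↦ ⟨hz, hle⟩) (fun hlt ↦ ⟨hSQ hz, hlt⟩)
    _ ≤ ∫⁻ z in S ∩ {z | w z ≤ b}, w z ∂μ + ∫⁻ z in Q ∩ {z | b < w z}, w z ∂μ :=
        lintegral_union_le _ _ _
    _ ≤ b * μ S + ∫⁻ z in Q ∩ {z | b < w z}, w z ∂μ := by
        gcongr
        calc ∫⁻ z in S ∩ {z | w z ≤ b}, w z ∂μ
            ≤ ∫⁻ _ in S ∩ {z | w z ≤ b}, b ∂μ := setLIntegral_mono measurable_const fun _ hz ↦ hz.2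
          _ = b * μ (S ∩ {z | w z ≤ b}) := setLIntegral_const _ _
          _ ≤ b * μ S := by gcongr; exact inter_subset_left

variable (μ) in
theorem exists_forall_isAInfWeight (C : ℝ≥0) :
    ∃ a : ℝ≥0, ∀ w, IsA1Weight μ w C → IsAInfWeight μ w a := by
  obtain ⟨K, hdecay⟩ := exists_setLIntegral_superlevel_mul_two_pow_le μ C
  refine ⟨2 * K, fun w hw x r hr S hS i D hSD ↦ ?_⟩
  let lam : ℝ≥0∞ := (∫⁻ z in closedBall x r, w z ∂μ) / μ (closedBall x r)
  have hlam : lam * μ (closedBall x r) = ∫⁻ z in closedBall x r, w z ∂μ :=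
    ENNReal.div_mul_cancel (measure_closedBall_pos μ x hr).ne' measure_closedBall_lt_top.ne
  push_cast at hSD
  calc (∫⁻ z in S, w z ∂μ) * 2 ^ i
      ≤ (K ^ i * lam * μ S + ∫⁻ z in closedBall x r ∩ {z | K ^ i * lam < w z}, w z ∂μ) * 2 ^ i := by
        gcongr
        exact setLIntegral_le_mul_measure_add w hS _
    _ = lam * (μ S * (2 * K) ^ i) +
          (∫⁻ z in closedBall x r ∩ {z | K ^ i * lam < w z}, w z ∂μ) * 2 ^ i := by ring
    _ ≤ lam * (D * μ (closedBall x r)) + ∫⁻ z in closedBall x r, w z ∂μ := by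
        gcongr
        exact hdecay w hw x r hr lam hlam.ge i
    _ = (D + 1) * ∫⁻ z in closedBall x r, w z ∂μ := by rw [← hlam]; ring

end AInf

section StoppingBalls

/-- A ball over which the average of `g` exceeds `s`, although its average is at most `s` over
every concentric ball of at least twice the radius. -/
structure IsStoppingBall {E : Type*} [PseudoMetricSpace E] [MeasurableSpace E] (μ : Measure E)
    (g : E → ℝ≥0∞) (s : ℝ≥0∞) (x : E) (r : ℝ) : Prop where
  radius_pos : 0 < r
  mul_measure_lt : s * μ (closedBall x r) < ∫⁻ z in closedBall x r, g z ∂μ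
  setLIntegral_le : ∀ r', 2 * r ≤ r' →
    ∫⁻ z in closedBall x r', g z ∂μ ≤ s * μ (closedBall x r')

variable {E : Type*} [NormedAddCommGroup E] [NormedSpace ℝ E] [FiniteDimensional ℝ E]
  [MeasurableSpace E] [BorelSpace E] {μ : Measure E} [μ.IsAddHaarMeasure] {g : E → ℝ≥0∞}

namespace IsStoppingBall

variable {s t : ℝ≥0∞} {x y : E} {r ρ : ℝ}

lemma setLIntegral_closedBall_le (h : IsStoppingBall μ g s x r) :
    ∫⁻ z in closedBall x r, g z ∂μ ≤ 2 ^ finrank ℝ E * s * μ (closedBall x r) := by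
  have hr := h.radius_pos
  calc ∫⁻ z in closedBall x r, g z ∂μ ≤ ∫⁻ z in closedBall x (2 * r), g z ∂μ :=
        lintegral_mono_set (closedBall_subset_closedBall (by linarith))
    _ ≤ s * μ (closedBall x (2 * r)) := h.setLIntegral_le _ le_rfl
    _ = 2 ^ finrank ℝ E * s * μ (closedBall x r) := by
        rw [addHaar_closedBall_ofNat_mul x x 2 hr.le]
        ring

-- If `ρ` exceeded `r`, the ball around `x` of radius `3 * ρ` would contain the one around `y`, and
-- so would have `g`-average above `3⁻ᵈ * t`.
lemma closedBall_subset_of_inter_nonempty (hx : IsStoppingBall μ g s x r)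
    (hy : IsStoppingBall μ g t y ρ) (hst : 3 ^ finrank ℝ E * s ≤ t)
    (hxy : (closedBall y ρ ∩ closedBall x r).Nonempty) :
    closedBall y ρ ⊆ closedBall x (5 * r) := by
  have hr := hx.radius_pos
  have hρ := hy.radius_pos
  obtain ⟨p, hpy, hpx⟩ := hxy
  have hdist : dist y x ≤ ρ + r :=
    (dist_triangle_left y x p).trans (add_le_add (mem_closedBall.1 hpy) (mem_closedBall.1 hpx))
  have hρr : ρ ≤ r := by
    by_contra! hlt
    refine (hy.mul_measure_lt.trans_le ?_).false
    calc ∫⁻ z in closedBall y ρ, g z ∂μ ≤ ∫⁻ z in closedBall x (3 * ρ), g z ∂μ :=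
          lintegral_mono_set (closedBall_subset_closedBall' (by linarith))
      _ ≤ s * μ (closedBall x (3 * ρ)) := hx.setLIntegral_le _ (by linarith)
      _ = 3 ^ finrank ℝ E * s * μ (closedBall y ρ) := by
          rw [addHaar_closedBall_ofNat_mul x y 3 hρ.le]
          ring
      _ ≤ t * μ (closedBall y ρ) := by gcongr
  exact closedBall_subset_closedBall' (by linarith)

end IsStoppingBall

variable [Nontrivial E] {s : ℝ≥0∞}

lemma exists_radius_le_of_mul_measure_lt_setLIntegral (hg : ∫⁻ z, g z ∂μ ≠ ⊤) (hs : s ≠ 0) :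
    ∃ R : ℝ, ∀ x r, s * μ (closedBall x r) < ∫⁻ z in closedBall x r, g z ∂μ → r ≤ R := by
  have hlim : Tendsto (fun N : ℕ ↦ μ (closedBall (0 : E) N)) atTop (𝓝 ⊤) := by
    have := NormedSpace.noncompactSpace ℝ E
    rw [← measure_univ_of_isAddLeftInvariant μ, ← iUnion_closedBall_nat (0 : E)]
    exact tendsto_measure_iUnion_atTop fun M N hMN ↦
      closedBall_subset_closedBall (Nat.cast_le.2 hMN)
  obtain ⟨N, hN⟩ := (hlim.eventually_const_lt (ENNReal.div_lt_top hg hs)).exists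
  refine ⟨N, fun x r h ↦ ?_⟩
  by_contra! hNr
  refine (h.trans_le (setLIntegral_le_lintegral _ _)).not_ge ?_
  calc ∫⁻ z, g z ∂μ ≤ μ (closedBall (0 : E) N) * s :=
        (ENNReal.div_le_iff_le_mul (.inl hs) (.inr hN.ne_bot)).1 hN.le
    _ = s * μ (closedBall (0 : E) N) := mul_comm _ _
    _ ≤ s * μ (closedBall (0 : E) r) := by gcongr
    _ = s * μ (closedBall x r) := by rw [Measure.addHaar_closedBall_center μ x]

lemma exists_isStoppingBall (hg : ∫⁻ z, g z ∂μ ≠ ⊤) (hs : s ≠ 0) {x : E}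
    (h : ∃ r, 0 < r ∧ s * μ (closedBall x r) < ∫⁻ z in closedBall x r, g z ∂μ) :
    ∃ r, IsStoppingBall μ g s x r := by
  obtain ⟨R, hR⟩ := exists_radius_le_of_mul_measure_lt_setLIntegral hg hs
  let A : Set ℝ := {r | 0 < r ∧ s * μ (closedBall x r) < ∫⁻ z in closedBall x r, g z ∂μ}
  have hA : BddAbove A := ⟨R, fun r hr ↦ hR x r hr.2⟩
  obtain ⟨r₀, hr₀⟩ := h
  obtain ⟨r, hrA, hr⟩ := exists_lt_of_lt_csSup (s := A) ⟨r₀, hr₀⟩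
    (half_lt_self (hr₀.1.trans_le (le_csSup hA hr₀)))
  refine ⟨r, hrA.1, hrA.2, fun r' hr' ↦ ?_⟩
  by_contra! hlt
  have hr'A : r' ≤ sSup A := le_csSup hA ⟨by linarith [hrA.1], hlt⟩
  linarith

lemma IsA1Weight.exists_stoppingBall_cover {v : E → ℝ≥0∞} {C : ℝ≥0} (hv : IsA1Weight μ v C)
    (hg : ∫⁻ z, g z ∂μ ≠ ⊤) (hs : s ≠ 0) (b : ℝ≥0∞) :
    ∃ J : Set (E × ℝ), J.Countable ∧ J.PairwiseDisjoint (fun p ↦ closedBall p.1 p.2) ∧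
      (∀ p ∈ J, IsStoppingBall μ g s p.1 p.2 ∧
        ∫⁻ z in closedBall p.1 (5 * p.2), v z ∂μ ≤ C * b * μ (closedBall p.1 (5 * p.2))) ∧
      ∀ᵐ y ∂μ, v y ≤ b →
        (∃ r, 0 < r ∧ s * μ (closedBall y r) < ∫⁻ z in closedBall y r, g z ∂μ) →
        ∃ p ∈ J, y ∈ closedBall p.1 (5 * p.2) := by
  obtain ⟨R, hR⟩ := exists_radius_le_of_mul_measure_lt_setLIntegral hg hs
  obtain ⟨U, hUT, hU, hdisj, hcover⟩ := exists_countable_disjoint_closedBall_cover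
    {p : E × ℝ | IsStoppingBall μ g s p.1 p.2} Prod.fst Prod.snd R
    (fun p hp ↦ hp.radius_pos) (fun p hp ↦ hR _ _ hp.mul_measure_lt)
  refine ⟨{p ∈ U | ∫⁻ z in closedBall p.1 (5 * p.2), v z ∂μ ≤
      C * b * μ (closedBall p.1 (5 * p.2))}, hU.mono (sep_subset _ _),
    hdisj.subset (sep_subset _ _), fun p hp ↦ ⟨hUT hp.1, hp.2⟩, ?_⟩
  have hlower : ∀ᵐ y ∂μ, ∀ p ∈ U, y ∈ closedBall p.1 (5 * p.2) →
      ∫⁻ z in closedBall p.1 (5 * p.2), v z ∂μ ≤ C * μ (closedBall p.1 (5 * p.2)) * v y :=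
    (ae_ball_iff hU).2 fun p hp ↦
      hv.ae_setLIntegral_le _ _ (mul_pos (by norm_num) (hUT hp).radius_pos)
  filter_upwards [hlower] with y hy hyb hyr
  obtain ⟨r, hr⟩ := exists_isStoppingBall hg hs hyr
  obtain ⟨p, hp, hsub⟩ := hcover (y, r) hr
  have hyp : y ∈ closedBall p.1 (5 * p.2) := hsub (mem_closedBall_self hr.radius_pos.le)
  refine ⟨p, ⟨hp, (hy p hp hyp).trans ?_⟩, hyp⟩
  rw [mul_right_comm]
  gcongr

end StoppingBalls

section MaximalSuperlevel

/-- The points where the centred Hardy–Littlewood maximal function of `g` exceeds `v`, in a form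
free of division. -/
def maximalSuperlevel {E : Type*} [PseudoMetricSpace E] [MeasurableSpace E] (μ : Measure E)
    (g v : E → ℝ≥0∞) : Set E :=
  {y | ∃ r, 0 < r ∧ v y * μ (closedBall y r) < ∫⁻ z in closedBall y r, g z ∂μ}

variable {E : Type*} [PseudoMetricSpace E] [MeasurableSpace E]

lemma monotone_maximalSuperlevel_left (μ : Measure E) (v : E → ℝ≥0∞) :
    Monotone fun g ↦ maximalSuperlevel μ g v :=
  fun _ _ hgg' _ ⟨r, hr, h⟩ ↦ ⟨r, hr, h.trans_le (lintegral_mono hgg')⟩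

lemma maximalSuperlevel_subset_iUnion_indicator [OpensMeasurableSpace E]
    (μ : Measure E) (g v : E → ℝ≥0∞) (x : E) :
    maximalSuperlevel μ g v ⊆
      ⋃ N : ℕ, maximalSuperlevel μ ((closedBall x N).indicator g) v := by
  rintro y ⟨r, hr, h⟩
  obtain ⟨N, hN⟩ := exists_nat_ge (r + dist y x)
  refine mem_iUnion.2 ⟨N, r, hr, ?_⟩
  rwa [setLIntegral_indicator isClosed_closedBall.measurableSet,
    inter_eq_right.2 (closedBall_subset_closedBall' hN)]

end MaximalSuperlevel

section StoppingFamilies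

/-- Stopping balls for `g` at the heights `a ^ level i`, disjoint within each level, together with
the integer `avgLevel i` for which the average of `v` over the dilated ball lies in the interval
`(C * a ^ avgLevel i, C * a ^ (avgLevel i + 1)]`. -/
structure StoppingFamily {E : Type*} [NormedAddCommGroup E] [NormedSpace ℝ E] [MeasurableSpace E]
    (μ : Measure E) (g v : E → ℝ≥0∞) (C a : ℝ≥0) (ι : Type*) where
  center : ι → E
  radius : ι → ℝ
  level : ι → ℤ
  avgLevel : ι → ℤ
  three_pow_le : 3 ^ finrank ℝ E ≤ a
  isStoppingBall : ∀ i, IsStoppingBall μ g ((a : ℝ≥0∞) ^ level i) (center i) (radius i)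
  disjoint : ∀ i j, i ≠ j → level i = level j →
    Disjoint (closedBall (center i) (radius i)) (closedBall (center j) (radius j))
  mul_measure_lt : ∀ i, C * (a : ℝ≥0∞) ^ avgLevel i * μ (closedBall (center i) (5 * radius i)) <
    ∫⁻ z in closedBall (center i) (5 * radius i), v z ∂μ
  setLIntegral_le : ∀ i, ∫⁻ z in closedBall (center i) (5 * radius i), v z ∂μ ≤
    C * (a : ℝ≥0∞) ^ (avgLevel i + 1) * μ (closedBall (center i) (5 * radius i))

namespace StoppingFamily

variable {E : Type*} [NormedAddCommGroup E] [NormedSpace ℝ E] [MeasurableSpace E] {μ : Measure E}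
  {g u v : E → ℝ≥0∞} {C a : ℝ≥0} {ι : Type*} (F : StoppingFamily μ g v C a ι)

/-- The subfamily indexed by `A`. -/
@[simps level avgLevel]
def restrict (A : Set ι) : StoppingFamily μ g v C a A where
  center i := F.center i
  radius i := F.radius i
  level i := F.level i
  avgLevel i := F.avgLevel i
  three_pow_le := F.three_pow_le
  isStoppingBall i := F.isStoppingBall i
  disjoint i j hij := F.disjoint i j (Subtype.coe_injective.ne hij)
  mul_measure_lt i := F.mul_measure_lt i
  setLIntegral_le i := F.setLIntegral_le i

/-- The `i`-th stopping ball. -/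
def ball (i : ι) : Set E := closedBall (F.center i) (F.radius i)

/-- The five-fold dilate of the `i`-th ball: the dilates, unlike the balls, cover the level set. -/
def dilate (i : ι) : Set E := closedBall (F.center i) (5 * F.radius i)

/-- The union of the balls lying `m` levels above the `i`-th ball and meeting it. -/
def satellites (i : ι) (m : ℕ) : Set E :=
  ⋃ j ∈ {j | F.level j = F.level i + m ∧ (F.ball j ∩ F.ball i).Nonempty}, F.ball j

/-- The part of the `i`-th ball outside all balls of higher level; the cores are disjoint. -/
def core (i : ι) : Set E := F.ball i \ ⋃ j ∈ {j | F.level i < F.level j}, F.ball j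

/-- The part of the `i`-th dilate where `v` is comparable to the height of the `i`-th ball. -/
def slice (i : ι) : Set E :=
  F.dilate i ∩ {y | (a : ℝ≥0∞) ^ F.level i < v y ∧ v y ≤ (a : ℝ≥0∞) ^ (F.level i + 1)}

section Heights

include F

lemma coe_ne_zero : (a : ℝ≥0∞) ≠ 0 :=
  ENNReal.coe_ne_zero.2 ((pow_pos three_pos _).trans_le F.three_pow_le).ne'

lemma zpow_ne_zero (k : ℤ) : (a : ℝ≥0∞) ^ k ≠ 0 :=
  (ENNReal.zpow_pos F.coe_ne_zero coe_ne_top k).ne'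

lemma zpow_ne_top (k : ℤ) : (a : ℝ≥0∞) ^ k ≠ ⊤ :=
  (ENNReal.zpow_lt_top F.coe_ne_zero coe_ne_top k).ne

lemma zpow_add_natCast (k : ℤ) (m : ℕ) : (a : ℝ≥0∞) ^ (k + m) = (a : ℝ≥0∞) ^ k * a ^ m := by
  rw [ENNReal.zpow_add F.coe_ne_zero coe_ne_top, zpow_natCast]

lemma zpow_add_one (k : ℤ) : (a : ℝ≥0∞) ^ (k + 1) = (a : ℝ≥0∞) ^ k * a := by
  simpa only [Nat.cast_one, pow_one] using F.zpow_add_natCast k 1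

end Heights

lemma radius_pos (i : ι) : 0 < F.radius i := (F.isStoppingBall i).radius_pos

lemma dilate_radius_pos (i : ι) : 0 < 5 * F.radius i := mul_pos (by norm_num) (F.radius_pos i)

lemma ball_subset_dilate (i : ι) : F.ball i ⊆ F.dilate i :=
  closedBall_subset_closedBall (by linarith [F.radius_pos i])

lemma disjoint_core {i j : ι} (hij : i ≠ j) : Disjoint (F.core i) (F.core j) := by
  have hlt {i j : ι} (h : F.level i < F.level j) : Disjoint (F.core i) (F.core j) :=
    disjoint_left.2 fun y hyi hyj ↦ hyi.2 (mem_iUnion₂.2 ⟨j, h, hyj.1⟩)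
  rcases lt_trichotomy (F.level i) (F.level j) with h | h | h
  · exact hlt h
  · exact (F.disjoint i j hij h).mono sdiff_subset sdiff_subset
  · exact (hlt h).symm

lemma ae_satellites_zpow_le [Countable ι] (hv : IsA1Weight μ v C) {p : ℤ}
    (hp : ∀ j, F.level j = F.avgLevel j + p) (i : ι) (m : ℕ) :
    ∀ᵐ y ∂μ, y ∈ F.satellites i m → (a : ℝ≥0∞) ^ (F.avgLevel i + m) ≤ v y := by
  filter_upwards [ae_all_iff.2 fun j ↦ hv.ae_lt_mul (F.dilate_radius_pos j) (F.mul_measure_lt j)]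
    with y hy hyS
  obtain ⟨j, hj, hyj⟩ := mem_iUnion₂.1 hyS
  have hlevel : F.avgLevel j = F.avgLevel i + m := by
    have := hj.1
    have := hp i
    have := hp j
    omega
  rw [← hlevel]
  exact (lt_of_mul_lt_mul_left' (hy j (F.ball_subset_dilate j hyj))).le

lemma measure_mul_pow_le {S : Set E} (hS : MeasurableSet S) {i : ι} (hSi : S ⊆ F.dilate i) {m : ℕ}
    (h : ∀ᵐ y ∂μ, y ∈ S → (a : ℝ≥0∞) ^ (F.avgLevel i + m) ≤ v y) :
    μ S * a ^ m ≤ C * a * μ (F.dilate i) := by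
  rw [← ENNReal.mul_le_mul_iff_right (F.zpow_ne_zero (F.avgLevel i)) (F.zpow_ne_top _)]
  calc (a : ℝ≥0∞) ^ F.avgLevel i * (μ S * a ^ m)
      = (a : ℝ≥0∞) ^ (F.avgLevel i + m) * μ S := by rw [F.zpow_add_natCast]; ring
    _ ≤ ∫⁻ y in S, v y ∂μ := mul_measure_le_setLIntegral hS h
    _ ≤ ∫⁻ y in F.dilate i, v y ∂μ := lintegral_mono_set hSi
    _ ≤ C * (a : ℝ≥0∞) ^ (F.avgLevel i + 1) * μ (F.dilate i) := F.setLIntegral_le i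
    _ = (a : ℝ≥0∞) ^ F.avgLevel i * (C * a * μ (F.dilate i)) := by rw [F.zpow_add_one]; ring

section Measurability

variable [OpensMeasurableSpace E]

lemma measurableSet_ball (i : ι) : MeasurableSet (F.ball i) := isClosed_closedBall.measurableSet

lemma measurableSet_slice (hv : Measurable v) (i : ι) :
    MeasurableSet (F.slice i) :=
  isClosed_closedBall.measurableSet.inter <|
    (measurableSet_lt measurable_const hv).inter (measurableSet_le hv measurable_const)

lemma setLIntegral_slice_mul_two_pow_le (hv : Measurable v) (hua : IsAInfWeight μ u a)
    {p : ℕ} (hp : ∀ j, F.level j = F.avgLevel j + p) (i : ι) :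
    (∫⁻ y in F.slice i, u y ∂μ) * 2 ^ p ≤ (C * a + 1) * ∫⁻ y in F.dilate i, u y ∂μ := by
  refine hua _ _ (F.dilate_radius_pos i) _ inter_subset_left p _ <|
    F.measure_mul_pow_le (F.measurableSet_slice hv i) inter_subset_left <|
    .of_forall fun y hy ↦ ?_
  rw [← hp]
  exact hy.2.1.le

lemma measurableSet_satellites [Countable ι] (i : ι) (m : ℕ) : MeasurableSet (F.satellites i m) :=
  MeasurableSet.biUnion (to_countable _) fun j _ ↦ F.measurableSet_ball j

lemma measurableSet_core [Countable ι] (i : ι) : MeasurableSet (F.core i) :=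
  (F.measurableSet_ball i).diff <|
    MeasurableSet.biUnion (to_countable _) fun j _ ↦ F.measurableSet_ball j

end Measurability

variable [FiniteDimensional ℝ E] [BorelSpace E] [μ.IsAddHaarMeasure]

lemma measure_dilate (i : ι) : μ (F.dilate i) = 5 ^ finrank ℝ E * μ (F.ball i) :=
  addHaar_closedBall_ofNat_mul _ _ 5 (F.radius_pos i).le

lemma setLIntegral_ball_ne_top (i : ι) : ∫⁻ z in F.ball i, g z ∂μ ≠ ⊤ :=
  ne_top_of_le_ne_top (ENNReal.mul_ne_top
    (ENNReal.mul_ne_top (by finiteness) (F.zpow_ne_top _)) measure_closedBall_lt_top.ne)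
    (F.isStoppingBall i).setLIntegral_closedBall_le

lemma ball_subset_dilate_of_level_lt {i j : ι} (hlt : F.level i < F.level j)
    (hij : (F.ball j ∩ F.ball i).Nonempty) : F.ball j ⊆ F.dilate i := by
  refine (F.isStoppingBall i).closedBall_subset_of_inter_nonempty (F.isStoppingBall j) ?_ hij
  have ha : (3 : ℝ≥0∞) ^ finrank ℝ E ≤ a := by exact_mod_cast F.three_pow_le
  calc 3 ^ finrank ℝ E * (a : ℝ≥0∞) ^ F.level i ≤ a * (a : ℝ≥0∞) ^ F.level i := by gcongr
    _ = (a : ℝ≥0∞) ^ (F.level i + 1) := by rw [F.zpow_add_one, mul_comm]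
    _ ≤ (a : ℝ≥0∞) ^ F.level j :=
        ENNReal.zpow_le_of_le (le_trans (one_le_pow₀ (by norm_num)) ha) hlt

lemma satellites_subset_dilate (i : ι) {m : ℕ} (hm : m ≠ 0) : F.satellites i m ⊆ F.dilate i :=
  iUnion₂_subset fun _ hj ↦ F.ball_subset_dilate_of_level_lt (by have := hj.1; omega) hj.2

variable [Countable ι]

lemma pow_mul_two_pow_mul_measure_satellites_le (hv : IsA1Weight μ v C) (hva : IsAInfWeight μ v a)
    {p : ℤ} (hp : ∀ j, F.level j = F.avgLevel j + p) (i : ι) {m : ℕ} (hm : m ≠ 0) :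
    a ^ m * 2 ^ m * μ (F.satellites i m) ≤
      (C * a + 1) * (C * a * 5 ^ finrank ℝ E) * μ (F.ball i) := by
  have hS := F.measurableSet_satellites i m
  have hsub := F.satellites_subset_dilate i hm
  have hlow := F.ae_satellites_zpow_le hv hp i m
  have hdecay := hva _ _ (F.dilate_radius_pos i) _ hsub m _ (F.measure_mul_pow_le hS hsub hlow)
  rw [← ENNReal.mul_le_mul_iff_right (F.zpow_ne_zero (F.avgLevel i)) (F.zpow_ne_top _)]
  calc (a : ℝ≥0∞) ^ F.avgLevel i * (a ^ m * 2 ^ m * μ (F.satellites i m))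
      = (a : ℝ≥0∞) ^ (F.avgLevel i + m) * μ (F.satellites i m) * 2 ^ m := by
        rw [F.zpow_add_natCast]; ring
    _ ≤ (∫⁻ y in F.satellites i m, v y ∂μ) * 2 ^ m := by
        gcongr
        exact mul_measure_le_setLIntegral hS hlow
    _ ≤ (C * a + 1) * ∫⁻ y in F.dilate i, v y ∂μ := hdecay
    _ ≤ (C * a + 1) * (C * (a : ℝ≥0∞) ^ (F.avgLevel i + 1) * μ (F.dilate i)) := by
        gcongr
        exact F.setLIntegral_le i
    _ = _ := by rw [F.zpow_add_one, F.measure_dilate]; ring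

lemma setLIntegral_satellites_le (i : ι) (m : ℕ) :
    ∫⁻ z in F.satellites i m, g z ∂μ ≤
      2 ^ finrank ℝ E * (a : ℝ≥0∞) ^ (F.level i + m) * μ (F.satellites i m) := by
  refine setLIntegral_biUnion_le_mul_measure_biUnion (to_countable _)
    (fun j _ ↦ F.measurableSet_ball j)
    (fun j hj k hk hjk ↦ F.disjoint j k hjk (hj.1.trans hk.1.symm)) fun j hj ↦ ?_
  rw [← hj.1]
  exact (F.isStoppingBall j).setLIntegral_closedBall_le

/-- The constant in the geometric decay of the `g`-mass of the satellites of a ball; `d` stands for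
the dimension. -/
def satelliteConst (d : ℕ) (C a : ℝ≥0) : ℝ≥0 :=
  2 ^ d * ((C * a + 1) * (C * a * 5 ^ d))

lemma two_pow_mul_setLIntegral_satellites_le (hv : IsA1Weight μ v C) (hva : IsAInfWeight μ v a)
    {p : ℤ} (hp : ∀ j, F.level j = F.avgLevel j + p) (i : ι) {m : ℕ} (hm : m ≠ 0) :
    2 ^ m * ∫⁻ z in F.satellites i m, g z ∂μ ≤
      satelliteConst (finrank ℝ E) C a * ∫⁻ z in F.ball i, g z ∂μ := by
  calc 2 ^ m * ∫⁻ z in F.satellites i m, g z ∂μ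
      ≤ 2 ^ m * (2 ^ finrank ℝ E * (a : ℝ≥0∞) ^ (F.level i + m) * μ (F.satellites i m)) := by
        gcongr
        exact F.setLIntegral_satellites_le i m
    _ = 2 ^ finrank ℝ E * (a : ℝ≥0∞) ^ F.level i * (a ^ m * 2 ^ m * μ (F.satellites i m)) := by
        rw [F.zpow_add_natCast]; ring
    _ ≤ 2 ^ finrank ℝ E * (a : ℝ≥0∞) ^ F.level i *
          ((C * a + 1) * (C * a * 5 ^ finrank ℝ E) * μ (F.ball i)) := by
        exact mul_le_mul_right (F.pow_mul_two_pow_mul_measure_satellites_le hv hva hp i hm) _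
    _ = satelliteConst (finrank ℝ E) C a * ((a : ℝ≥0∞) ^ F.level i * μ (F.ball i)) := by
        push_cast [satelliteConst]; ring
    _ ≤ _ := by
        gcongr
        exact (F.isStoppingBall i).mul_measure_lt.le

lemma two_mul_setLIntegral_iUnion_satellites_le (hv : IsA1Weight μ v C)
    (hva : IsAInfWeight μ v a) {p : ℤ} (hp : ∀ j, F.level j = F.avgLevel j + p) (i : ι) {m : ℕ}
    (hm : m ≠ 0) (hDm : 4 * satelliteConst (finrank ℝ E) C a ≤ 2 ^ m) :
    2 * ∫⁻ z in ⋃ k : ℕ, F.satellites i (m + k), g z ∂μ ≤ ∫⁻ z in F.ball i, g z ∂μ := by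
  let D : ℝ≥0∞ := satelliteConst (finrank ℝ E) C a
  have hD : 4 * (satelliteConst (finrank ℝ E) C a : ℝ≥0∞) ≤ 2 ^ m := by exact_mod_cast hDm
  let G : ℝ≥0∞ := ∫⁻ z in F.ball i, g z ∂μ
  calc 2 * ∫⁻ z in ⋃ k : ℕ, F.satellites i (m + k), g z ∂μ
      ≤ 2 * ∑' k : ℕ, ∫⁻ z in F.satellites i (m + k), g z ∂μ := by
        gcongr
        exact lintegral_iUnion_le _ _
    _ ≤ 2 * ∑' k : ℕ, 2⁻¹ ^ (m + k) * (D * G) := by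
        gcongr with k
        exact le_inv_two_pow_mul (F.two_pow_mul_setLIntegral_satellites_le hv hva hp i (by omega))
    _ = 2⁻¹ ^ m * (4 * D) * G := by
        simp_rw [pow_add, mul_assoc]
        rw [ENNReal.tsum_mul_left, ENNReal.tsum_mul_right, ENNReal.tsum_geometric,
          ENNReal.one_sub_inv_two, inv_inv]
        ring
    _ ≤ 2⁻¹ ^ m * 2 ^ m * G := by
        gcongr
    _ = G := by
        rw [← mul_pow, ENNReal.inv_mul_cancel two_ne_zero ofNat_ne_top, one_pow, one_mul]

lemma setLIntegral_ball_le_two_mul_core (hv : IsA1Weight μ v C) (hva : IsAInfWeight μ v a) {p : ℤ}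
    (hp : ∀ j, F.level j = F.avgLevel j + p) {m : ℕ} (hm : m ≠ 0)
    (hDm : 4 * satelliteConst (finrank ℝ E) C a ≤ 2 ^ m)
    (hgap : ∀ i j, F.level i < F.level j → F.level i + m ≤ F.level j) (i : ι) :
    ∫⁻ z in F.ball i, g z ∂μ ≤ 2 * ∫⁻ z in F.core i, g z ∂μ := by
  have hsub : F.ball i ⊆ F.core i ∪ ⋃ k : ℕ, F.satellites i (m + k) := fun y hy ↦ by
    rw [mem_union, or_iff_not_imp_left]
    intro hcore
    obtain ⟨j, hij, hyj⟩ := mem_iUnion₂.1 (by_contra fun h ↦ hcore ⟨hy, h⟩)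
    obtain ⟨k, hk⟩ := Int.le.dest (hgap i j hij)
    refine mem_iUnion.2 ⟨k, mem_iUnion₂.2 ⟨j, ⟨?_, y, hyj, hy⟩, hyj⟩⟩
    push_cast
    omega
  rw [← ENNReal.add_le_add_iff_right (F.setLIntegral_ball_ne_top i)]
  calc ∫⁻ z in F.ball i, g z ∂μ + ∫⁻ z in F.ball i, g z ∂μ
      = 2 * ∫⁻ z in F.ball i, g z ∂μ := (two_mul _).symm
    _ ≤ 2 * (∫⁻ z in F.core i, g z ∂μ + ∫⁻ z in ⋃ k : ℕ, F.satellites i (m + k), g z ∂μ) := by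
        gcongr
        exact (lintegral_mono_set hsub).trans (lintegral_union_le _ _ _)
    _ ≤ 2 * ∫⁻ z in F.core i, g z ∂μ + ∫⁻ z in F.ball i, g z ∂μ := by
        rw [mul_add]
        gcongr
        exact F.two_mul_setLIntegral_iUnion_satellites_le hv hva hp i hm hDm

lemma setLIntegral_dilate_mul_setLIntegral_core_le (hu : IsA1Weight μ u C) (i : ι) :
    (∫⁻ y in F.dilate i, u y ∂μ) * ∫⁻ y in F.core i, g y ∂μ ≤
      C * (5 ^ finrank ℝ E * μ (F.ball i)) * ∫⁻ y in F.core i, g y * u y ∂μ := by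
  rw [← F.measure_dilate]
  exact hu.setLIntegral_mul_setLIntegral_le (F.dilate_radius_pos i) (F.measurableSet_core i)
    (sdiff_subset.trans (F.ball_subset_dilate i)) g

/-- The constant in the mixed bound for one ball; `d` stands for the dimension. -/
def sliceConst (d : ℕ) (C a : ℝ≥0) : ℝ≥0 :=
  2 * a * (C * a + 1) * C * 5 ^ d

lemma two_pow_mul_setLIntegral_slice_mul_le (hu : IsA1Weight μ u C) (hv : IsA1Weight μ v C)
    (hua : IsAInfWeight μ u a) (hva : IsAInfWeight μ v a) {p : ℕ}
    (hp : ∀ j, F.level j = F.avgLevel j + p) {m : ℕ} (hm : m ≠ 0)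
    (hDm : 4 * satelliteConst (finrank ℝ E) C a ≤ 2 ^ m)
    (hgap : ∀ i j, F.level i < F.level j → F.level i + m ≤ F.level j) (i : ι) :
    2 ^ p * ∫⁻ y in F.slice i, u y * v y ∂μ ≤
      sliceConst (finrank ℝ E) C a * ∫⁻ y in F.core i, g y * u y ∂μ := by
  have hball_ne_zero : μ (F.ball i) ≠ 0 := (measure_closedBall_pos μ _ (F.radius_pos i)).ne'
  have hball_ne_top : μ (F.ball i) ≠ ⊤ := measure_closedBall_lt_top.ne
  rw [← ENNReal.mul_le_mul_iff_left hball_ne_zero hball_ne_top]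
  calc 2 ^ p * (∫⁻ y in F.slice i, u y * v y ∂μ) * μ (F.ball i)
      ≤ 2 ^ p * ((∫⁻ y in F.slice i, u y ∂μ) * (a : ℝ≥0∞) ^ (F.level i + 1)) * μ (F.ball i) := by
        gcongr
        rw [← lintegral_mul_const _ hu.measurable]
        refine setLIntegral_mono (hu.measurable.mul_const _) fun y hy ↦ ?_
        gcongr
        exact hy.2.2
    _ = a * ((a : ℝ≥0∞) ^ F.level i * μ (F.ball i)) * ((∫⁻ y in F.slice i, u y ∂μ) * 2 ^ p) := by
        rw [F.zpow_add_one]; ring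
    _ ≤ a * (2 * ∫⁻ y in F.core i, g y ∂μ) * ((C * a + 1) * ∫⁻ y in F.dilate i, u y ∂μ) := by
        refine mul_le_mul' (mul_le_mul_right ?_ _)
          (F.setLIntegral_slice_mul_two_pow_le hv.measurable hua hp i)
        exact (F.isStoppingBall i).mul_measure_lt.le.trans
          (F.setLIntegral_ball_le_two_mul_core hv hva hp hm hDm hgap i)
    _ = 2 * a * (C * a + 1) * ((∫⁻ y in F.dilate i, u y ∂μ) * ∫⁻ y in F.core i, g y ∂μ) := by ring
    _ ≤ 2 * a * (C * a + 1) *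
          (C * (5 ^ finrank ℝ E * μ (F.ball i)) * ∫⁻ y in F.core i, g y * u y ∂μ) :=
        mul_le_mul_right (F.setLIntegral_dilate_mul_setLIntegral_core_le hu i) _
    _ = _ := by push_cast [sliceConst]; ring

lemma tsum_setLIntegral_slice_mul_le_of_gap (hu : IsA1Weight μ u C) (hv : IsA1Weight μ v C)
    (hua : IsAInfWeight μ u a) (hva : IsAInfWeight μ v a) {p : ℕ}
    (hp : ∀ j, F.level j = F.avgLevel j + p) {m : ℕ} (hm : m ≠ 0)
    (hDm : 4 * satelliteConst (finrank ℝ E) C a ≤ 2 ^ m)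
    (hgap : ∀ i j, F.level i < F.level j → F.level i + m ≤ F.level j) :
    ∑' i, ∫⁻ y in F.slice i, u y * v y ∂μ ≤
      2⁻¹ ^ p * (sliceConst (finrank ℝ E) C a * ∫⁻ y, g y * u y ∂μ) := by
  calc ∑' i, ∫⁻ y in F.slice i, u y * v y ∂μ
      ≤ ∑' i, 2⁻¹ ^ p * (sliceConst (finrank ℝ E) C a * ∫⁻ y in F.core i, g y * u y ∂μ) :=
        ENNReal.tsum_le_tsum fun i ↦ le_inv_two_pow_mul
          (F.two_pow_mul_setLIntegral_slice_mul_le hu hv hua hva hp hm hDm hgap i)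
    _ = 2⁻¹ ^ p * (sliceConst (finrank ℝ E) C a * ∫⁻ y in ⋃ i, F.core i, g y * u y ∂μ) := by
        rw [ENNReal.tsum_mul_left, ENNReal.tsum_mul_left,
          lintegral_iUnion F.measurableSet_core fun i j hij ↦ F.disjoint_core hij]
    _ ≤ _ := by
        gcongr
        exact Measure.restrict_le_self

-- Splitting the family by the difference of the two levels and by the residue of the level modulo
-- `m` makes the former constant and the gaps between levels at least `m`; the resulting bounds
-- decay geometrically in the difference.
theorem tsum_setLIntegral_slice_mul_le (hu : IsA1Weight μ u C) (hv : IsA1Weight μ v C)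
    (hua : IsAInfWeight μ u a) (hva : IsAInfWeight μ v a) (hle : ∀ i, F.avgLevel i ≤ F.level i)
    {m : ℕ} (hm : m ≠ 0) (hDm : 4 * satelliteConst (finrank ℝ E) C a ≤ 2 ^ m) :
    ∑' i, ∫⁻ y in F.slice i, u y * v y ∂μ ≤
      2 * m * sliceConst (finrank ℝ E) C a * ∫⁻ y, g y * u y ∂μ := by
  have : NeZero m := ⟨hm⟩
  let cls : ι → ℕ × ZMod m := fun i ↦ ((F.level i - F.avgLevel i).toNat, (F.level i : ZMod m))
  let B : ℝ≥0∞ := sliceConst (finrank ℝ E) C a * ∫⁻ y, g y * u y ∂μ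
  have hclass (c : ℕ × ZMod m) :
      ∑' i : cls ⁻¹' {c}, ∫⁻ y in F.slice i, u y * v y ∂μ ≤ 2⁻¹ ^ c.1 * B := by
    refine (F.restrict (cls ⁻¹' {c})).tsum_setLIntegral_slice_mul_le_of_gap hu hv hua hva
      (fun j ↦ ?_) hm hDm fun i j hij ↦ ?_
    · have hc : (F.level j - F.avgLevel j).toNat = c.1 := congrArg Prod.fst j.2
      have := hle j
      simp only [restrict_level, restrict_avgLevel]
      omega
    · have hmod : (F.level i : ZMod m) = F.level j := congrArg Prod.snd (i.2.trans j.2.symm)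
      rw [ZMod.intCast_eq_intCast_iff_dvd_sub] at hmod
      simp only [restrict_level] at hij ⊢
      have := Int.le_of_dvd (sub_pos.2 hij) hmod
      omega
  calc ∑' i, ∫⁻ y in F.slice i, u y * v y ∂μ
      = ∑' c, ∑' i : cls ⁻¹' {c}, ∫⁻ y in F.slice i, u y * v y ∂μ :=
        (ENNReal.tsum_fiberwise _ cls).symm
    _ ≤ ∑' c : ℕ × ZMod m, 2⁻¹ ^ c.1 * B := ENNReal.tsum_le_tsum hclass
    _ = ∑' (k : ℕ) (_ : ZMod m), 2⁻¹ ^ k * B := ENNReal.tsum_prod (f := fun k _ ↦ 2⁻¹ ^ k * B)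
    _ = 2 * m * B := by
        simp_rw [tsum_fintype, Finset.sum_const, Finset.card_univ, ZMod.card, nsmul_eq_mul,
          mul_left_comm (m : ℝ≥0∞)]
        rw [ENNReal.tsum_mul_right, ENNReal.tsum_geometric, ENNReal.one_sub_inv_two, inv_inv,
          mul_assoc]
    _ = _ := (mul_assoc _ _ _).symm

end StoppingFamily

universe uE

variable {E : Type uE} [NormedAddCommGroup E] [NormedSpace ℝ E] [FiniteDimensional ℝ E]
  [MeasurableSpace E] [BorelSpace E] {μ : Measure E} [μ.IsAddHaarMeasure] {g u v : E → ℝ≥0∞}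
  {C : ℝ≥0}

lemma IsA1Weight.exists_zpow_mul_measure_lt (hv : IsA1Weight μ v C) {a : ℝ≥0} (ha : 1 < a)
    (x : E) {r : ℝ} (hr : 0 < r) :
    ∃ k : ℤ, C * (a : ℝ≥0∞) ^ k * μ (closedBall x r) < ∫⁻ z in closedBall x r, v z ∂μ ∧
      ∫⁻ z in closedBall x r, v z ∂μ ≤ C * (a : ℝ≥0∞) ^ (k + 1) * μ (closedBall x r) := by
  have hC : (C : ℝ≥0∞) ≠ 0 := coe_ne_zero.2 (zero_lt_one.trans_le hv.one_le).ne'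
  have hzero : C * μ (closedBall x r) ≠ 0 := mul_ne_zero hC (measure_closedBall_pos μ x hr).ne'
  have htop : C * μ (closedBall x r) ≠ ⊤ :=
    ENNReal.mul_ne_top coe_ne_top measure_closedBall_lt_top.ne
  obtain ⟨k, hlt, hle⟩ := ENNReal.exists_mem_Ioc_zpow
    (ENNReal.div_ne_zero.2 ⟨hv.setLIntegral_ne_zero hr, htop⟩)
    (ENNReal.div_ne_top (hv.setLIntegral_ne_top x r hr) hzero) (ENNReal.one_lt_coe_iff.2 ha)
    coe_ne_top
  rw [ENNReal.lt_div_iff_mul_lt (.inl hzero) (.inl htop)] at hlt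
  rw [ENNReal.div_le_iff hzero htop] at hle
  exact ⟨k, by rwa [mul_right_comm, mul_comm], by rwa [mul_right_comm, mul_comm]⟩

theorem IsA1Weight.exists_stoppingFamily [Nontrivial E] (hv : IsA1Weight μ v C)
    (hg : ∫⁻ z, g z ∂μ ≠ ⊤) {a : ℝ≥0} (ha : 3 ^ finrank ℝ E ≤ a) :
    ∃ (ι : Type uE) (_ : Countable ι) (F : StoppingFamily μ g v C a ι),
      (∀ i, F.avgLevel i ≤ F.level i) ∧
      ∀ᵐ y ∂μ, y ∈ maximalSuperlevel μ g v → ∃ i, y ∈ F.slice i := by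
  have ha_one : 1 < a := (one_lt_pow₀ (by norm_num) finrank_pos.ne').trans_le ha
  have ha_one' : 1 < (a : ℝ≥0∞) := ENNReal.one_lt_coe_iff.2 ha_one
  have ha_zero : (a : ℝ≥0∞) ≠ 0 := (zero_lt_one.trans ha_one').ne'
  choose J hJcount hJdisj hJ hJcover using fun k : ℤ ↦
    hv.exists_stoppingBall_cover hg (ENNReal.zpow_pos ha_zero coe_ne_top k).ne'
      ((a : ℝ≥0∞) ^ (k + 1))
  have hradius (i : Σ k, J k) : 0 < 5 * i.2.1.2 :=
    mul_pos (by norm_num) (hJ i.1 _ i.2.2).1.radius_pos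
  choose avgLevel hlt hle using fun i : Σ k, J k ↦
    hv.exists_zpow_mul_measure_lt ha_one i.2.1.1 (hradius i)
  have (k : ℤ) : Countable (J k) := (hJcount k).to_subtype
  let F : StoppingFamily μ g v C a (Σ k, J k) :=
    { center i := i.2.1.1
      radius i := i.2.1.2
      level i := i.1
      avgLevel := avgLevel
      three_pow_le := ha
      isStoppingBall i := (hJ i.1 _ i.2.2).1
      disjoint := by
        rintro ⟨k, p⟩ ⟨_, q⟩ hpq rfl
        exact hJdisj k p.2 q.2 fun h ↦ hpq (by rw [Subtype.ext h])
      mul_measure_lt := hlt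
      setLIntegral_le := hle }
  refine ⟨_, inferInstance, F, fun i ↦ ?_, ?_⟩
  · have h := lt_of_mul_lt_mul_left' <| lt_of_mul_lt_mul_right' <|
      (hlt i).trans_le (hJ i.1 _ i.2.2).2
    exact Int.lt_add_one_iff.1 <| lt_of_not_ge fun hge ↦
      h.not_ge (ENNReal.zpow_le_of_le ha_one'.le hge)
  · filter_upwards [ae_all_iff.2 hJcover, hv.ae_pos, hv.ae_lt_top]
      with y hcover hpos htop ⟨r, hr, hyr⟩
    obtain ⟨k, hk, hk'⟩ := ENNReal.exists_mem_Ioc_zpow hpos.ne' htop.ne ha_one' coe_ne_top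
    obtain ⟨p, hp, hyp⟩ := hcover k hk' ⟨r, hr, (mul_le_mul_left hk.le _).trans_lt hyr⟩
    exact ⟨⟨k, p, hp⟩, hyp, hk, hk'⟩

end StoppingFamilies

section MixedWeakType

variable {E : Type*} [NormedAddCommGroup E] [NormedSpace ℝ E] [FiniteDimensional ℝ E]
  [MeasurableSpace E] [BorelSpace E] {μ : Measure E} [μ.IsAddHaarMeasure] {g u v : E → ℝ≥0∞}
  {C : ℝ≥0}

theorem exists_setLIntegral_maximalSuperlevel_le_of_lintegral_ne_top [Nontrivial E] (μ : Measure E)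
    [μ.IsAddHaarMeasure] (C : ℝ≥0) :
    ∃ D : ℝ≥0, ∀ u v, IsA1Weight μ u C → IsA1Weight μ v C → ∀ g, ∫⁻ y, g y ∂μ ≠ ⊤ →
      ∫⁻ y in maximalSuperlevel μ g v, u y * v y ∂μ ≤ D * ∫⁻ y, g y * u y ∂μ := by
  obtain ⟨b, hb⟩ := exists_forall_isAInfWeight μ C
  let a : ℝ≥0 := max b (3 ^ finrank ℝ E)
  obtain ⟨m, hm⟩ := pow_unbounded_of_one_lt
    (4 * StoppingFamily.satelliteConst (finrank ℝ E) C a) one_lt_two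
  have hm' : 4 * StoppingFamily.satelliteConst (finrank ℝ E) C a ≤ 2 ^ (m + 1) :=
    hm.le.trans (pow_le_pow_right₀ one_le_two m.le_succ)
  refine ⟨2 * (m + 1 : ℕ) * StoppingFamily.sliceConst (finrank ℝ E) C a, fun u v hu hv g hg ↦ ?_⟩
  obtain ⟨ι, _, F, hle, hcover⟩ := hv.exists_stoppingFamily hg (le_max_right b _)
  calc ∫⁻ y in maximalSuperlevel μ g v, u y * v y ∂μ
      ≤ ∫⁻ y in ⋃ i, F.slice i, u y * v y ∂μ :=
        lintegral_mono_set' <| hcover.mono fun y hy hyΩ ↦ mem_iUnion.2 (hy hyΩ)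
    _ ≤ ∑' i, ∫⁻ y in F.slice i, u y * v y ∂μ := lintegral_iUnion_le _ _
    _ ≤ 2 * (m + 1 : ℕ) * StoppingFamily.sliceConst (finrank ℝ E) C a * ∫⁻ y, g y * u y ∂μ :=
        F.tsum_setLIntegral_slice_mul_le hu hv ((hb u hu).mono (le_max_left _ _))
          ((hb v hv).mono (le_max_left _ _)) hle m.succ_ne_zero hm'
    _ = _ := by push_cast; rfl

lemma IsA1Weight.setLIntegral_ne_top_of_lintegral_mul_ne_top (hu : IsA1Weight μ u C)
    (hgu : ∫⁻ y, g y * u y ∂μ ≠ ⊤) (x : E) (r : ℝ) : ∫⁻ y in closedBall x r, g y ∂μ ≠ ⊤ := by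
  have hr : 0 < max r 1 := lt_max_of_lt_right one_pos
  refine ne_top_of_le_ne_top (b := ∫⁻ y in closedBall x (max r 1), g y ∂μ) (fun htop ↦ ?_)
    (lintegral_mono_set (closedBall_subset_closedBall (le_max_left r 1)))
  have hle := hu.setLIntegral_mul_setLIntegral_le (x := x) hr isClosed_closedBall.measurableSet
    subset_rfl g
  rw [htop, ENNReal.mul_top (hu.setLIntegral_ne_zero hr), top_le_iff] at hle
  exact ENNReal.mul_ne_top (ENNReal.mul_ne_top coe_ne_top measure_closedBall_lt_top.ne)
    (ne_top_of_le_ne_top hgu (setLIntegral_le_lintegral _ _)) hle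

theorem exists_setLIntegral_maximalSuperlevel_le [Nontrivial E] (μ : Measure E)
    [μ.IsAddHaarMeasure] (C : ℝ≥0) :
    ∃ D : ℝ≥0, ∀ u v, IsA1Weight μ u C → IsA1Weight μ v C → ∀ g,
      ∫⁻ y in maximalSuperlevel μ g v, u y * v y ∂μ ≤ D * ∫⁻ y, g y * u y ∂μ := by
  obtain ⟨D, hD⟩ := exists_setLIntegral_maximalSuperlevel_le_of_lintegral_ne_top μ C
  refine ⟨max D 1, fun u v hu hv g ↦ ?_⟩
  obtain hgu | hgu := eq_or_ne (∫⁻ y, g y * u y ∂μ) ⊤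
  · rw [hgu, ENNReal.mul_top (by simp)]
    exact le_top
  let trunc (N : ℕ) : E → ℝ≥0∞ := (closedBall 0 N).indicator g
  have hmono : Monotone trunc := fun M N hMN ↦ indicator_le_indicator_of_subset
    (closedBall_subset_closedBall (Nat.cast_le.2 hMN)) fun _ ↦ zero_le
  calc ∫⁻ y in maximalSuperlevel μ g v, u y * v y ∂μ
      ≤ ∫⁻ y in ⋃ N, maximalSuperlevel μ (trunc N) v, u y * v y ∂μ :=
        lintegral_mono_set (maximalSuperlevel_subset_iUnion_indicator μ g v 0)
    _ = ⨆ N, ∫⁻ y in maximalSuperlevel μ (trunc N) v, u y * v y ∂μ := by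
        simp_rw [← withDensity_apply']
        exact ((monotone_maximalSuperlevel_left μ v).comp hmono).measure_iUnion
    _ ≤ max D 1 * ∫⁻ y, g y * u y ∂μ := iSup_le fun N ↦ ?_
  have htrunc : ∫⁻ y, trunc N y ∂μ ≠ ⊤ := by
    rw [lintegral_indicator isClosed_closedBall.measurableSet]
    exact hu.setLIntegral_ne_top_of_lintegral_mul_ne_top hgu 0 N
  refine (hD u v hu hv _ htrunc).trans ?_
  gcongr with y
  · exact_mod_cast le_max_left D 1
  · exact indicator_le_self _ _ y

end MixedWeakType

section Cubes

variable {n : ℕ}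

lemma isCube_iff_exists_preimage_toLp_eq_closedBall {Q : Set (ESp n)} :
    IsCube Q ↔ ∃ (x : Fin n → ℝ) (r : ℝ), 0 < r ∧ WithLp.toLp 2 ⁻¹' Q = closedBall x r := by
  have hbox (c : Fin n → ℝ) (h : ℝ) (hh : 0 < h) :
      WithLp.toLp 2 ⁻¹' {x : ESp n | ∀ i, c i ≤ x i ∧ x i ≤ c i + h} =
        closedBall (fun i ↦ c i + h / 2) (h / 2) := by
    ext y
    rw [mem_closedBall, dist_pi_le_iff (half_pos hh).le]
    refine forall_congr' fun i ↦ ?_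
    rw [Real.dist_eq, abs_le]
    constructor <;> rintro ⟨_, _⟩ <;> constructor <;> linarith
  constructor
  · rintro ⟨c, h, hh, rfl⟩
    exact ⟨_, _, half_pos hh, hbox c h hh⟩
  · rintro ⟨x, r, hr, hQ⟩
    refine ⟨fun i ↦ x i - r, 2 * r, by positivity, ?_⟩
    refine (WithLp.toLp_surjective 2).preimage_injective ?_
    rw [hQ, hbox _ _ (by positivity)]
    simp only [mul_div_cancel_left₀ r two_ne_zero, sub_add_cancel]

lemma setLIntegral_eq_preimage_toLp (f : ESp n → ℝ≥0∞) (S : Set (ESp n)) :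
    ∫⁻ x in S, f x = ∫⁻ y in WithLp.toLp 2 ⁻¹' S, f (WithLp.toLp 2 y) :=
  ((PiLp.volume_preserving_toLp (Fin n)).setLIntegral_comp_preimage_emb
    (MeasurableEquiv.toLp 2 _).measurableEmbedding f S).symm

lemma volume_eq_preimage_toLp (S : Set (ESp n)) :
    volume S = volume (WithLp.toLp 2 ⁻¹' S : Set (Fin n → ℝ)) :=
  ((PiLp.volume_preserving_toLp (Fin n)).measure_preimage_emb
    (MeasurableEquiv.toLp 2 _).measurableEmbedding S).symm

lemma IsCube.measurableSet {Q : Set (ESp n)} (hQ : IsCube Q) : MeasurableSet Q := by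
  obtain ⟨x, r, -, hQ⟩ := isCube_iff_exists_preimage_toLp_eq_closedBall.1 hQ
  refine (MeasurableEquiv.toLp 2 (Fin n → ℝ)).measurableSet_preimage.1 ?_
  exact hQ ▸ isClosed_closedBall.measurableSet

lemma A1Const.mono {w : ESp n → ℝ} {A B : ℝ≥0∞} (h : A1Const w A) (hAB : A ≤ B) : A1Const w B :=
  fun Q hQ ↦ (h Q hQ).trans (mul_le_mul_left hAB _)

lemma A1Const.isA1Weight {w : ESp n → ℝ} {A : ℝ≥0} (h : A1Const w A) (hw : IsWeight w) :
    IsA1Weight volume (fun y : Fin n → ℝ ↦ ENNReal.ofReal (w (WithLp.toLp 2 y))) A := by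
  obtain ⟨hmeas, -, hpos, hfin⟩ := hw
  have htoLp := PiLp.volume_preserving_toLp (Fin n)
  have hcube (x : Fin n → ℝ) (r : ℝ) (hr : 0 < r) :
      ∃ Q : Set (ESp n), IsCube Q ∧ WithLp.toLp 2 ⁻¹' Q = closedBall x r :=
    ⟨WithLp.ofLp ⁻¹' closedBall x r,
      isCube_iff_exists_preimage_toLp_eq_closedBall.2 ⟨x, r, hr, rfl⟩, rfl⟩
  refine ⟨(hmeas.comp htoLp.measurable).ennreal_ofReal, ?_, fun x r hr ↦ ?_, fun x r hr ↦ ?_⟩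
  · filter_upwards [htoLp.quasiMeasurePreserving.ae hpos] with y hy
    exact ENNReal.ofReal_pos.2 hy
  · obtain ⟨Q, hQ, hQx⟩ := hcube x r hr
    rw [← hQx, ← setLIntegral_eq_preimage_toLp (fun x ↦ ENNReal.ofReal (w x))]
    exact (hfin Q hQ).ne
  · obtain ⟨Q, hQ, hQx⟩ := hcube x r hr
    have hessInf := (ae_restrict_iff' hQ.measurableSet).1
      (ae_essInf_le (f := fun x ↦ ENNReal.ofReal (w x)) (μ := volume.restrict Q))
    filter_upwards [htoLp.quasiMeasurePreserving.ae hessInf] with y hy hyx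
    have hle := (h Q hQ).trans (mul_le_mul_right (hy (hQx ▸ hyx : y ∈ WithLp.toLp 2 ⁻¹' Q)) _)
    rw [wMeas, setLIntegral_eq_preimage_toLp, volume_eq_preimage_toLp, hQx,
      ENNReal.inv_mul_le_iff (measure_closedBall_pos _ _ hr).ne' measure_closedBall_lt_top.ne,
      mul_left_comm, ← mul_assoc] at hle
    exact hle

lemma exists_mul_volume_closedBall_lt_of_lt_maxFn {f : ESp n → ℝ} {y : Fin n → ℝ} {c : ℝ≥0∞}
    (h : c < maxFn f (WithLp.toLp 2 y)) :
    ∃ r, 0 < r ∧ c * volume (closedBall y r) <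
      2 ^ n * ∫⁻ z in closedBall y r, ENNReal.ofReal |f (WithLp.toLp 2 z)| := by
  simp only [maxFn, lt_iSup_iff] at h
  obtain ⟨Q, hQ, hyQ, hlt⟩ := h
  obtain ⟨x, r, hr, hQx⟩ := isCube_iff_exists_preimage_toLp_eq_closedBall.1 hQ
  have hyx : y ∈ closedBall x r := hQx ▸ hyQ
  rw [setLIntegral_eq_preimage_toLp, volume_eq_preimage_toLp, hQx, mul_comm, ← div_eq_mul_inv,
    ENNReal.lt_div_iff_mul_lt (.inl (measure_closedBall_pos _ _ hr).ne')
      (.inl measure_closedBall_lt_top.ne)] at hlt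
  refine ⟨2 * r, by positivity, ?_⟩
  calc c * volume (closedBall y (2 * r)) = 2 ^ n * (c * volume (closedBall x r)) := by
        rw [addHaar_closedBall_ofNat_mul y x 2 hr.le, finrank_fin_fun, mul_left_comm]
    _ < 2 ^ n * ∫⁻ z in closedBall x r, ENNReal.ofReal |f (WithLp.toLp 2 z)| :=
        (ENNReal.mul_lt_mul_iff_right (pow_ne_zero n two_ne_zero) (by finiteness)).2 hlt
    _ ≤ _ := by
        gcongr
        exact closedBall_subset_closedBall' (by linarith [mem_closedBall'.1 hyx])

lemma mem_maximalSuperlevel_of_lt_maxFn_div {f v : ESp n → ℝ} {y : Fin n → ℝ} {t : ℝ}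
    (ht : 0 < t) (hv : 0 < v (WithLp.toLp 2 y))
    (h : ENNReal.ofReal t < maxFn f (WithLp.toLp 2 y) / ENNReal.ofReal (v (WithLp.toLp 2 y))) :
    y ∈ maximalSuperlevel volume
      (fun z ↦ 2 ^ n / ENNReal.ofReal t * ENNReal.ofReal |f (WithLp.toLp 2 z)|)
      (fun z ↦ ENNReal.ofReal (v (WithLp.toLp 2 z))) := by
  have ht' : ENNReal.ofReal t ≠ 0 := (ENNReal.ofReal_pos.2 ht).ne'
  rw [ENNReal.lt_div_iff_mul_lt (.inl (ENNReal.ofReal_pos.2 hv).ne') (.inl ofReal_ne_top)] at h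
  obtain ⟨r, hr, hlt⟩ := exists_mul_volume_closedBall_lt_of_lt_maxFn h
  refine ⟨r, hr, ?_⟩
  rw [lintegral_const_mul' _ _ (ENNReal.div_ne_top (by finiteness) ht'),
    ← ENNReal.mul_div_right_comm,
    ENNReal.lt_div_iff_mul_lt (.inl ht') (.inl ofReal_ne_top)]
  exact lt_of_eq_of_lt (by ring) hlt

end Cubes

theorem CMP_mixed_weak_type_general {n : ℕ} (hn : 0 < n) (A : ℝ≥0) :
    ∃ C : ℝ≥0∞, C < ⊤ ∧
      ∀ u v : ESp n → ℝ, IsWeight u → IsWeight v → A1Const u A → A1Const v A →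
        ∀ (f : ESp n → ℝ) (t : ℝ), 0 < t →
          wMeas (fun x ↦ u x * v x)
              {x | ENNReal.ofReal t < maxFn (fun y ↦ f y * v y) x / ENNReal.ofReal (v x)}
            ≤ (C / ENNReal.ofReal t) * ∫⁻ x, ENNReal.ofReal (|f x| * u x * v x) := by
  have : Nonempty (Fin n) := Fin.pos_iff_nonempty.1 hn
  obtain ⟨D, hD⟩ := exists_setLIntegral_maximalSuperlevel_le (volume : Measure (Fin n → ℝ)) A
  refine ⟨D * 2 ^ n, by finiteness, fun u v hu hv hu1 hv1 f t ht ↦ ?_⟩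
  let g (y : Fin n → ℝ) : ℝ≥0∞ :=
    2 ^ n / ENNReal.ofReal t * ENNReal.ofReal |f (WithLp.toLp 2 y) * v (WithLp.toLp 2 y)|
  have hconst : 2 ^ n / ENNReal.ofReal t ≠ ⊤ :=
    ENNReal.div_ne_top (by finiteness) (ENNReal.ofReal_pos.2 ht).ne'
  have hv_pos := (PiLp.volume_preserving_toLp (Fin n)).quasiMeasurePreserving.ae hv.2.2.1
  rw [wMeas, setLIntegral_eq_preimage_toLp]
  simp_rw [ENNReal.ofReal_mul (hu.2.1 _)]
  calc _ ≤ ∫⁻ y in maximalSuperlevel volume g (fun y ↦ ENNReal.ofReal (v (WithLp.toLp 2 y))),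
        ENNReal.ofReal (u (WithLp.toLp 2 y)) * ENNReal.ofReal (v (WithLp.toLp 2 y)) :=
        lintegral_mono_set' <| hv_pos.mono fun y hy h ↦
          mem_maximalSuperlevel_of_lt_maxFn_div (f := fun y ↦ f y * v y) ht hy h
    _ ≤ D * ∫⁻ y, g y * ENNReal.ofReal (u (WithLp.toLp 2 y)) :=
        hD _ _ (hu1.isA1Weight hu) (hv1.isA1Weight hv) g
    _ = D * (2 ^ n / ENNReal.ofReal t * ∫⁻ x, ENNReal.ofReal (|f x| * u x * v x)) := by
        rw [← setLIntegral_univ (fun x ↦ ENNReal.ofReal (|f x| * u x * v x)),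
          setLIntegral_eq_preimage_toLp, preimage_univ, setLIntegral_univ,
          ← lintegral_const_mul' _ _ hconst]
        congr with y
        rw [mul_assoc, ← ENNReal.ofReal_mul (abs_nonneg _), abs_mul, abs_of_nonneg (hv.2.1 _),
          mul_right_comm]
    _ = _ := by rw [← mul_assoc, mul_div_assoc]

/-- **Cruz-Uribe–Martell–Pérez extension of Sawyer's inequality to `ℝⁿ`.**  If `u, v ∈ A₁`
then there is a constant `C` such that for every locally integrable `f` and every `t > 0`,
`uv({x : M(fv)(x)/v(x) > t}) ≤ (C/t) ∫ |f| u v`. -/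
theorem CMP_mixed_weak_type {n : ℕ} (hn : 0 < n) (u v : ESp n → ℝ)
    (hu : IsWeight u) (hv : IsWeight v) (hu1 : IsA1 u) (hv1 : IsA1 v) :
    ∃ C : ℝ≥0∞, C < ⊤ ∧
      ∀ f : ESp n → ℝ, LocallyIntegrable f volume → ∀ t : ℝ, 0 < t →
        wMeas (fun x => u x * v x)
            {x : ESp n | ENNReal.ofReal t < maxFn (fun y => f y * v y) x / ENNReal.ofReal (v x)}
          ≤ (C / ENNReal.ofReal t) * ∫⁻ x, ENNReal.ofReal (|f x| * u x * v x) := by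
  obtain ⟨A, hA, huA⟩ := hu1
  obtain ⟨B, hB, hvB⟩ := hv1
  lift A to ℝ≥0 using hA.ne
  lift B to ℝ≥0 using hB.ne
  obtain ⟨C, hC, h⟩ := CMP_mixed_weak_type_general hn (max A B)
  exact ⟨C, hC, fun f _ ↦ h u v hu hv (huA.mono (mod_cast le_max_left A B))
    (hvB.mono (mod_cast le_max_right A B)) f⟩

end
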